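/- There exists a constant C > 0 such that for every p ∈ (1, ∞), every d ≥ 1, every Lipschitz function f : ℝ → ℝ with Lipschitz constant at most 1, and all d×d Hermitian complex matrices X and Y, the following holds: if X = U·diag(μ₁,…,μ_d)·U* and Y = V·diag(ν₁,…,ν_d)·V* with U, V unitary and μᵢ, νᵢ ∈ ℝ, and one sets f(X) = U·diag(f(μ₁),…,f(μ_d))·U* and f(Y) = V·diag(f(ν₁),…,f(ν_d))·V*, then ‖f(X) − f(Y)‖_p ≤ C·(p²/(p−1))·‖X − Y‖_p. The constant C is independent of p, d, f, X, Y. -/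

import Mathlib

open Finset Matrix

/-- The singular values of a square complex matrix: the square roots of the eigenvalues of
the positive semidefinite Hermitian matrix `Mᴴ * M`. -/
noncomputable def singularValues {d : ℕ} (M : Matrix (Fin d) (Fin d) ℂ) : Fin d → ℝ :=
  fun i => Real.sqrt ((Matrix.isHermitian_conjTranspose_mul_self M).eigenvalues i)

/-- The Schatten `p`-norm of a square complex matrix: `(∑ᵢ σᵢ(M)^p)^(1/p)`. -/
noncomputable def schattenNorm {d : ℕ} (p : ℝ) (M : Matrix (Fin d) (Fin d) ℂ) : ℝ :=
  (∑ i, singularValues M i ^ p) ^ (1 / p)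

/-!
By trace duality, an operator has norm at most `K` on the Schatten class `S_p` as soon as
`Re tr (T A * B) ≤ K (‖A‖_p ^ p / p + ‖B‖_q ^ q / q)` for conjugate exponents `p`, `q`. In this form
dyadic martingale transforms of matrix-valued functions are bounded with constant `O(p² / (p - 1))`:
orthogonality of martingale differences is the case `p = 2`, Cuculescu's projections give the
weak-type `(1, 1)` inequality, and Marcinkiewicz interpolation and duality give the rest.

Conjugating a matrix by diagonal unitaries whose entries are characters of independent signs turns a
martingale transform into a Schur multiplier. For alternating coefficients, as the number of signs
tends to infinity and then the frequencies to zero, its symbol becomes that of a second-order Riesz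
transform, `b² / (a² + b²)` at `a = α j - α l` and `b = β j - β l`; a rotation by `π / 4` yields
`a b / (a² + b²)` as well. For `|r| < 1`, `a = (r - cos θ) x` and `b = x sin θ`, a Poisson kernel
computation shows that the mean of `(a b sin θ + b² cos θ) / (a² + b²)` over `θ` is `r / 2`. With
`r = (f s - f t) / (s - t)` and `x = s - t`, this makes the divided differences of a Lipschitz
function `f` a bounded Schur multiplier, which maps the Hermitian dilation of `Uᴴ (X - Y) V` to that
of `Uᴴ (f X - f Y) V`.
-/

namespace SchattenLipschitz

open scoped BigOperators ComplexOrder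

/-! ### Spectral decompositions and Schatten power sums -/

section Spectral

variable {n : Type*} [Fintype n]

/-- The real part of the trace, as a real-linear functional. The trace pairing of Hermitian
matrices is real, so nothing is lost. -/
noncomputable def reTrace : Matrix n n ℂ →ₗ[ℝ] ℝ :=
  Complex.reLm ∘ₗ traceLinearMap n ℝ ℂ

lemma reTrace_apply (A : Matrix n n ℂ) : reTrace A = A.trace.re := rfl

lemma reTrace_mul_comm (A B : Matrix n n ℂ) : reTrace (A * B) = reTrace (B * A) := by
  rw [reTrace_apply, trace_mul_comm, reTrace_apply]

lemma reTrace_nonneg {A : Matrix n n ℂ} (hA : A.PosSemidef) : 0 ≤ reTrace A :=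
  (Complex.nonneg_iff.mp hA.trace_nonneg).1

variable [DecidableEq n]

/-- The matrix `W diag(a) Wᴴ` with eigenvectors the columns of the unitary `W` and real eigenvalues
`a`. Bundling `a ↦ W diag(a) Wᴴ` as an algebra homomorphism makes arithmetic of commuting Hermitian
matrices into `map_add`, `map_mul`, .... -/
noncomputable def unitaryDiag (W : unitaryGroup n ℂ) : (n → ℝ) →ₐ[ℝ] Matrix n n ℂ :=
  ((Unitary.conjStarAlgAut ℂ (Matrix n n ℂ) W).toAlgEquiv.toAlgHom.restrictScalars ℝ).comp
    ((diagonalAlgHom ℝ).comp (Complex.ofRealAm.compLeft n))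

lemma unitaryDiag_apply (W : unitaryGroup n ℂ) (a : n → ℝ) :
    unitaryDiag W a = W * diagonal (fun i => (a i : ℂ)) * (W : Matrix n n ℂ)ᴴ := rfl

lemma isHermitian_unitaryDiag (W : unitaryGroup n ℂ) (a : n → ℝ) :
    (unitaryDiag W a).IsHermitian :=
  isHermitian_mul_mul_conjTranspose _ <| isHermitian_diagonal_of_self_adjoint _ <| by
    ext i; simp

lemma exists_eq_unitaryDiag {H : Matrix n n ℂ} (hH : H.IsHermitian) :
    ∃ (W : unitaryGroup n ℂ) (a : n → ℝ), H = unitaryDiag W a :=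
  ⟨hH.eigenvectorUnitary, hH.eigenvalues, hH.spectral_theorem⟩

lemma posSemidef_unitaryDiag_iff {W : unitaryGroup n ℂ} {a : n → ℝ} :
    (unitaryDiag W a).PosSemidef ↔ 0 ≤ a := by
  rw [unitaryDiag_apply, ← star_eq_conjTranspose,
    IsUnit.posSemidef_star_right_conjugate_iff (Unitary.isUnit_coe (U := W)),
    posSemidef_diagonal_iff]
  simp [Pi.le_def]

lemma unitaryDiag_injective (W : unitaryGroup n ℂ) : Function.Injective (unitaryDiag W) := by
  have hle : ∀ {a b : n → ℝ}, unitaryDiag W a = unitaryDiag W b → a ≤ b := fun {a b} h => by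
    rw [← sub_nonneg, ← posSemidef_unitaryDiag_iff (W := W), map_sub, h, sub_self]
    exact .zero
  exact fun a b h => (hle h).antisymm (hle h.symm)

lemma isStarProjection_unitaryDiag_iff {W : unitaryGroup n ℂ} {a : n → ℝ} :
    IsStarProjection (unitaryDiag W a) ↔ ∀ i, a i = 0 ∨ a i = 1 := by
  rw [isStarProjection_iff, and_iff_left (isHermitian_unitaryDiag W a).isSelfAdjoint,
    IsIdempotentElem, ← map_mul, (unitaryDiag_injective W).eq_iff, funext_iff]
  exact forall_congr' fun i => IsIdempotentElem.iff_eq_zero_or_one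

lemma charpoly_unitaryDiag (W : unitaryGroup n ℂ) (a : n → ℝ) :
    (unitaryDiag W a).charpoly = (diagonal fun i => (a i : ℂ)).charpoly := by
  rw [unitaryDiag_apply, charpoly_mul_comm, ← Matrix.mul_assoc, ← star_eq_conjTranspose,
    Unitary.coe_star_mul_self, Matrix.one_mul]

lemma reTrace_unitaryDiag (W : unitaryGroup n ℂ) (a : n → ℝ) :
    reTrace (unitaryDiag W a) = ∑ i, a i := by
  rw [unitaryDiag_apply, reTrace_mul_comm, ← Matrix.mul_assoc, ← star_eq_conjTranspose,
    Unitary.coe_star_mul_self, Matrix.one_mul, reTrace_apply, trace_diagonal]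
  simp

/-- The `p`-th power `∑ᵢ σᵢ(M)^p` of the Schatten `p`-norm. Working with it avoids the triangle
inequality for Schatten norms altogether. -/
noncomputable def schattenPow (p : ℝ) (M : Matrix n n ℂ) : ℝ :=
  ∑ i, √((isHermitian_conjTranspose_mul_self M).eigenvalues i) ^ p

lemma schattenPow_nonneg (p : ℝ) (M : Matrix n n ℂ) : 0 ≤ schattenPow p M :=
  sum_nonneg fun _ _ => Real.rpow_nonneg (Real.sqrt_nonneg _) _

lemma schattenPow_eq_sum_roots (p : ℝ) (M : Matrix n n ℂ) :
    schattenPow p M = ((Mᴴ * M).charpoly.roots.map fun z => √z.re ^ p).sum := by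
  rw [(isHermitian_conjTranspose_mul_self M).roots_charpoly_eq_eigenvalues, Multiset.map_map]
  rfl

lemma schattenPow_unitaryDiag (p : ℝ) (W : unitaryGroup n ℂ) (a : n → ℝ) :
    schattenPow p (unitaryDiag W a) = ∑ i, |a i| ^ p := by
  rw [schattenPow_eq_sum_roots, (isHermitian_unitaryDiag W a).eq, ← map_mul, charpoly_unitaryDiag,
    charpoly_diagonal, Polynomial.roots_prod _ _
      (prod_ne_zero_iff.mpr fun i _ => Polynomial.X_sub_C_ne_zero _)]
  simp only [Pi.mul_apply, Polynomial.roots_X_sub_C, Multiset.bind_singleton, Multiset.map_map,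
    Function.comp_apply, Complex.ofReal_re, Real.sqrt_mul_self_eq_abs]
  rfl

lemma schattenPow_mul_unitary (p : ℝ) (M : Matrix n n ℂ) (U : unitaryGroup n ℂ) :
    schattenPow p (M * (U : Matrix n n ℂ)) = schattenPow p M := by
  rw [schattenPow_eq_sum_roots, schattenPow_eq_sum_roots, conjTranspose_mul, Matrix.mul_assoc,
    charpoly_mul_comm, ← Matrix.mul_assoc, Matrix.mul_assoc,
    ← star_eq_conjTranspose (U : Matrix n n ℂ), Unitary.mul_star_self_of_mem U.2, Matrix.mul_one]

lemma schattenPow_unitary_mul (p : ℝ) (U : unitaryGroup n ℂ) (M : Matrix n n ℂ) :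
    schattenPow p ((U : Matrix n n ℂ) * M) = schattenPow p M := by
  rw [schattenPow_eq_sum_roots, schattenPow_eq_sum_roots, conjTranspose_mul, Matrix.mul_assoc,
    ← Matrix.mul_assoc _ _ M, ← star_eq_conjTranspose (U : Matrix n n ℂ),
    Unitary.coe_star_mul_self, Matrix.one_mul]

lemma schattenPow_smul (p c : ℝ) {H : Matrix n n ℂ} (hH : H.IsHermitian) :
    schattenPow p (c • H) = |c| ^ p * schattenPow p H := by
  obtain ⟨W, a, rfl⟩ := exists_eq_unitaryDiag hH
  rw [← map_smul, schattenPow_unitaryDiag, schattenPow_unitaryDiag, mul_sum]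
  simp [abs_mul, Real.mul_rpow]

lemma schattenPow_two {H : Matrix n n ℂ} (hH : H.IsHermitian) :
    schattenPow 2 H = reTrace (H * H) := by
  obtain ⟨W, a, rfl⟩ := exists_eq_unitaryDiag hH
  rw [← map_mul, reTrace_unitaryDiag, schattenPow_unitaryDiag]
  simp [← sq]

lemma reTrace_unitaryDiag_mul_unitaryDiag (W V : unitaryGroup n ℂ) (a b : n → ℝ) :
    reTrace (unitaryDiag W a * unitaryDiag V b)
      = ∑ i, ∑ j, a i * b j * Complex.normSq ((star W * V : unitaryGroup n ℂ) i j) := by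
  set Q : unitaryGroup n ℂ := star W * V with hQ
  have hconj : reTrace (unitaryDiag W a * unitaryDiag V b)
      = reTrace (diagonal (fun i => (a i : ℂ)) * (Q : Matrix n n ℂ)
        * diagonal (fun i => (b i : ℂ)) * (Q : Matrix n n ℂ)ᴴ) := by
    rw [unitaryDiag_apply, unitaryDiag_apply, Matrix.mul_assoc (W : Matrix n n ℂ),
      Matrix.mul_assoc (W : Matrix n n ℂ), reTrace_mul_comm (W : Matrix n n ℂ), hQ]
    simp [Matrix.mul_assoc, star_eq_conjTranspose]
  rw [hconj, reTrace_apply, trace]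
  simp only [diag_apply, mul_apply (M := _ * _ * _), mul_diagonal, diagonal_mul,
    conjTranspose_apply, Complex.re_sum]
  refine sum_congr rfl fun i _ => sum_congr rfl fun j _ => ?_
  rw [mul_right_comm (a i : ℂ), mul_assoc (_ * _), Complex.star_def, Complex.mul_conj,
    ← Complex.ofReal_mul, ← Complex.ofReal_mul, Complex.ofReal_re]

lemma sum_normSq_row (Q : unitaryGroup n ℂ) (i : n) : ∑ j, Complex.normSq (Q i j) = 1 := by
  have h := congrArg Complex.re (congrFun₂ (Unitary.coe_mul_star_self Q) i i)
  simpa [mul_apply, Complex.mul_conj] using h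

lemma sum_normSq_col (Q : unitaryGroup n ℂ) (j : n) : ∑ i, Complex.normSq (Q i j) = 1 := by
  simpa using sum_normSq_row (star Q) j

theorem reTrace_mul_le_young {p q : ℝ} (hpq : p.HolderConjugate q) {A B : Matrix n n ℂ}
    (hA : A.IsHermitian) (hB : B.IsHermitian) :
    reTrace (A * B) ≤ schattenPow p A / p + schattenPow q B / q := by
  obtain ⟨W, a, rfl⟩ := exists_eq_unitaryDiag hA
  obtain ⟨V, b, rfl⟩ := exists_eq_unitaryDiag hB
  rw [reTrace_unitaryDiag_mul_unitaryDiag, schattenPow_unitaryDiag, schattenPow_unitaryDiag]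
  set Q := star W * V
  calc ∑ i, ∑ j, a i * b j * Complex.normSq (Q i j)
      ≤ ∑ i, ∑ j, (|a i| ^ p / p * Complex.normSq (Q i j)
          + |b j| ^ q / q * Complex.normSq (Q i j)) := by
        simp only [← add_mul]
        gcongr with i _ j _
        · exact Complex.normSq_nonneg _
        · exact Real.young_inequality _ _ hpq
    _ = (∑ i, |a i| ^ p / p * ∑ j, Complex.normSq (Q i j))
          + ∑ j, |b j| ^ q / q * ∑ i, Complex.normSq (Q i j) := by
        simp only [sum_add_distrib, mul_sum]
        rw [sum_comm (f := fun i j => |b j| ^ q / q * _)]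
    _ = _ := by simp only [sum_normSq_row, sum_normSq_col, mul_one, sum_div]

lemma exists_reTrace_mul_eq_schattenPow {p q : ℝ} (hpq : p.HolderConjugate q) {A : Matrix n n ℂ}
    (hA : A.IsHermitian) :
    ∃ B : Matrix n n ℂ, B.IsHermitian ∧ reTrace (A * B) = schattenPow p A ∧
      schattenPow q B = schattenPow p A := by
  obtain ⟨W, a, rfl⟩ := exists_eq_unitaryDiag hA
  refine ⟨unitaryDiag W fun i => SignType.sign (a i) * |a i| ^ (p - 1),
    isHermitian_unitaryDiag _ _, ?_, ?_⟩
  · rw [← map_mul, reTrace_unitaryDiag, schattenPow_unitaryDiag]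
    refine sum_congr rfl fun i _ => ?_
    rw [Pi.mul_apply, ← mul_assoc, mul_comm (a i), sign_mul_self,
      ← Real.rpow_one_add' (abs_nonneg _) (by simp [hpq.ne_zero]), add_sub_cancel]
  · rw [schattenPow_unitaryDiag, schattenPow_unitaryDiag]
    refine sum_congr rfl fun i _ => ?_
    rcases eq_or_ne (a i) 0 with h | h
    · simp [h, hpq.ne_zero, hpq.symm.ne_zero]
    · have hsign : |((SignType.sign (a i) : SignType) : ℝ)| = 1 := by
        rcases h.lt_or_gt with h | h <;> simp [h]
      rw [abs_mul, hsign, one_mul, abs_of_nonneg (by positivity),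
        ← Real.rpow_mul (abs_nonneg _), hpq.sub_one_mul_conj]

lemma exists_posSemidef_sub {p : ℝ} (hp : p ≠ 0) {A : Matrix n n ℂ} (hA : A.IsHermitian) :
    ∃ B C : Matrix n n ℂ, B.PosSemidef ∧ C.PosSemidef ∧ A = B - C ∧
      schattenPow p B + schattenPow p C = schattenPow p A := by
  obtain ⟨W, a, rfl⟩ := exists_eq_unitaryDiag hA
  refine ⟨unitaryDiag W a⁺, unitaryDiag W a⁻, posSemidef_unitaryDiag_iff.mpr (posPart_nonneg a),
    posSemidef_unitaryDiag_iff.mpr (negPart_nonneg a), ?_, ?_⟩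
  · rw [← map_sub, posPart_sub_negPart]
  · simp only [schattenPow_unitaryDiag, ← sum_add_distrib]
    refine sum_congr rfl fun i _ => ?_
    rcases le_total 0 (a i) with h | h <;> simp [Pi.posPart_apply, Pi.negPart_apply, h, hp]

end Spectral

/-! ### Dyadic martingale transforms -/

section Dyadic

/-- The sample space of `k` coin flips; the uniform average over it is Mathlib's `𝔼`. -/
abbrev CoinFlips (k : ℕ) : Type := Fin k → Bool

lemma expect_coinFlips_succ {V : Type*} [AddCommMonoid V] [Module ℚ≥0 V] {k : ℕ}
    (F : CoinFlips (k + 1) → V) : 𝔼 w, F w = 𝔼 b, 𝔼 w, F (vecCons b w) := by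
  rw [← Fintype.expect_equiv (Fin.consEquiv fun _ => Bool) (fun v => F (vecCons v.1 v.2)) F
    fun _ => rfl]
  exact expect_product univ univ _

variable {V V' : Type*} [AddCommGroup V] [Module ℝ V] [Module ℚ≥0 V]
  [AddCommGroup V'] [Module ℝ V'] [Module ℚ≥0 V']

lemma expect_map (L : V →ₗ[ℝ] V') {ι : Type*} (s : Finset ι) (f : ι → V) :
    𝔼 i ∈ s, L (f i) = L (𝔼 i ∈ s, f i) := by
  simp only [expect, ← NNRat.cast_smul_eq_nnqsmul ℝ, map_smul, map_sum]

/-- The martingale transform `∑ᵢ c i • dᵢF` of `F`, where `dᵢF` is the increment of the conditional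
expectations of `F` at the `i`-th coin flip. -/
noncomputable def transform : (k : ℕ) → (ℕ → ℝ) → (CoinFlips k → V) → CoinFlips k → V
  | 0, _, _, _ => 0
  | k + 1, c, F, w => c 0 • (𝔼 v, F (vecCons (vecHead w) v) - 𝔼 v, F v)
      + transform k (fun i => c (i + 1)) (fun v => F (vecCons (vecHead w) v)) (vecTail w)

lemma transform_zero (c : ℕ → ℝ) (F : CoinFlips 0 → V) (w : CoinFlips 0) :
    transform 0 c F w = 0 := rfl

lemma transform_succ (k : ℕ) (c : ℕ → ℝ) (F : CoinFlips (k + 1) → V) (b : Bool)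
    (w : CoinFlips k) :
    transform (k + 1) c F (vecCons b w)
      = c 0 • (𝔼 v, F (vecCons b v) - 𝔼 b', 𝔼 v, F (vecCons b' v))
        + transform k (fun i => c (i + 1)) (fun v => F (vecCons b v)) w := by
  rw [← expect_coinFlips_succ]; rfl

lemma transform_sub (k : ℕ) (c : ℕ → ℝ) (F G : CoinFlips k → V) (w : CoinFlips k) :
    transform k c (fun v => F v - G v) w = transform k c F w - transform k c G w := by
  induction k generalizing c with
  | zero => simp [transform_zero]
  | succ k ih =>
    rw [← cons_head_tail w]
    simp only [transform_succ, ih, expect_sub_distrib]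
    module

lemma transform_map (L : V →ₗ[ℝ] V') (k : ℕ) (c : ℕ → ℝ) (F : CoinFlips k → V)
    (w : CoinFlips k) : transform k c (fun v => L (F v)) w = L (transform k c F w) := by
  induction k generalizing c with
  | zero => simp [transform_zero]
  | succ k ih =>
    rw [← cons_head_tail w]
    simp only [transform_succ, ih, expect_map, map_add, map_smul, map_sub]

lemma expect_transform (k : ℕ) (c : ℕ → ℝ) (F : CoinFlips k → V) :
    𝔼 w, transform k c F w = 0 := by
  induction k generalizing c with
  | zero => exact expect_eq_zero fun _ _ => rfl
  | succ k ih =>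
    simp only [expect_coinFlips_succ, transform_succ, expect_add_distrib, ih, add_zero,
      Fintype.expect_const, ← smul_expect, expect_sub_distrib, sub_self, smul_zero]

end Dyadic

section MatrixValued

variable {n ι : Type*}

lemma isHermitian_real_smul (c : ℝ) {A : Matrix n n ℂ} (hA : A.IsHermitian) :
    (c • A).IsHermitian := by
  rw [IsHermitian, conjTranspose_smul, hA.eq, star_trivial]

lemma isHermitian_expect (s : Finset ι) {f : ι → Matrix n n ℂ} (hf : ∀ i, (f i).IsHermitian) :
    (𝔼 i ∈ s, f i).IsHermitian := by
  rw [expect, ← NNRat.cast_smul_eq_nnqsmul ℝ]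
  exact isHermitian_real_smul _ (isSelfAdjoint_sum s fun i _ => hf i)

lemma posSemidef_expect (s : Finset ι) {f : ι → Matrix n n ℂ} (hf : ∀ i, (f i).PosSemidef) :
    (𝔼 i ∈ s, f i).PosSemidef := by
  rw [expect, ← NNRat.cast_smul_eq_nnqsmul ℝ]
  exact (posSemidef_sum s fun i _ => hf i).smul (by positivity)

lemma posSemidef_two_smul_sub {H : Bool → Matrix n n ℂ} (hH : ∀ b, (H b).PosSemidef)
    {A : Matrix n n ℂ} (hle : (A - 𝔼 b, H b).PosSemidef) (b : Bool) :
    ((2 : ℝ) • A - H b).PosSemidef := by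
  have hsum : (2 : ℝ) • A - H b = (2 : ℝ) • (A - 𝔼 b, H b) + H (!b) := by
    rw [expect, ← NNRat.cast_smul_eq_nnqsmul ℝ]
    cases b <;> simp <;> module
  rw [hsum]
  exact (hle.smul (by norm_num)).add (hH _)

lemma isHermitian_transform (k : ℕ) (c : ℕ → ℝ) {F : CoinFlips k → Matrix n n ℂ}
    (hF : ∀ w, (F w).IsHermitian) (w : CoinFlips k) : (transform k c F w).IsHermitian := by
  induction k generalizing c with
  | zero => exact isHermitian_zero
  | succ k ih =>
    rw [← cons_head_tail w, transform_succ]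
    exact (isHermitian_real_smul _ ((isHermitian_expect _ fun v => hF _).sub
      (isHermitian_expect _ fun b => isHermitian_expect _ fun v => hF _))).add
      (ih _ (fun v => hF _) _)

variable [Fintype n]

lemma expect_reTrace (s : Finset ι) (f : ι → Matrix n n ℂ) :
    𝔼 i ∈ s, reTrace (f i) = reTrace (𝔼 i ∈ s, f i) :=
  expect_map reTrace s f

lemma expect_reTrace_mul_left (s : Finset ι) (A : Matrix n n ℂ) (f : ι → Matrix n n ℂ) :
    𝔼 i ∈ s, reTrace (A * f i) = reTrace (A * 𝔼 i ∈ s, f i) :=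
  expect_map (reTrace ∘ₗ mulLeftLinearMap n ℝ A) s f

lemma expect_reTrace_mul_right (s : Finset ι) (f : ι → Matrix n n ℂ) (A : Matrix n n ℂ) :
    𝔼 i ∈ s, reTrace (f i * A) = reTrace ((𝔼 i ∈ s, f i) * A) :=
  expect_map (reTrace ∘ₗ mulRightLinearMap n ℝ A) s f

theorem expect_reTrace_transform_mul (k : ℕ) (c : ℕ → ℝ) (F G : CoinFlips k → Matrix n n ℂ) :
    𝔼 w, reTrace (transform k c F w * G w) = 𝔼 w, reTrace (F w * transform k c G w) := by
  induction k generalizing c with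
  | zero => simp [transform_zero]
  | succ k ih =>
    simp only [expect_coinFlips_succ, transform_succ, Matrix.add_mul, Matrix.mul_add, map_add,
      expect_add_distrib, ih, expect_reTrace_mul_left, expect_reTrace_mul_right, Matrix.smul_mul,
      Matrix.mul_smul, map_smul, Matrix.sub_mul, Matrix.mul_sub, map_sub, ← smul_expect,
      expect_sub_distrib]

section Energy

lemma reTrace_sq_nonneg {A : Matrix n n ℂ} (hA : A.IsHermitian) : 0 ≤ reTrace (A * A) := by
  simpa [hA.eq] using reTrace_nonneg (posSemidef_conjTranspose_mul_self A)

variable [Fintype ι] [Nonempty ι]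

lemma expect_reTrace_sq_const_add (A : Matrix n n ℂ) {G : ι → Matrix n n ℂ}
    (hG : 𝔼 i, G i = 0) :
    𝔼 i, reTrace ((A + G i) * (A + G i)) = reTrace (A * A) + 𝔼 i, reTrace (G i * G i) := by
  simp only [Matrix.add_mul, Matrix.mul_add, map_add, expect_add_distrib,
    expect_reTrace_mul_left, expect_reTrace_mul_right, hG, Fintype.expect_const]
  simp

lemma expect_reTrace_sq_smul_sub_add_le {c : ℝ} (hc : |c| ≤ 1) {f : ι → Matrix n n ℂ}
    (hf : ∀ i, (f i).IsHermitian) :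
    𝔼 i, reTrace ((c • (f i - 𝔼 j, f j)) * (c • (f i - 𝔼 j, f j)))
        + reTrace ((𝔼 j, f j) * 𝔼 j, f j)
      ≤ 𝔼 i, reTrace (f i * f i) := by
  set M := 𝔼 j, f j with hM
  have hpyth : 𝔼 i, reTrace (f i * f i)
      = reTrace (M * M) + 𝔼 i, reTrace ((f i - M) * (f i - M)) := by
    rw [← expect_reTrace_sq_const_add M (G := fun i => f i - M)
      (by rw [expect_sub_distrib, Fintype.expect_const, ← hM, sub_self])]
    simp
  have hscale : ∀ i, reTrace ((c • (f i - M)) * (c • (f i - M)))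
      ≤ reTrace ((f i - M) * (f i - M)) := fun i => by
    rw [Matrix.smul_mul, Matrix.mul_smul, smul_smul, map_smul, smul_eq_mul, ← sq]
    exact mul_le_of_le_one_left
      (reTrace_sq_nonneg ((hf i).sub (isHermitian_expect _ hf)))
      ((sq_le_one_iff_abs_le_one c).mpr hc)
  rw [hpyth, add_comm]
  gcongr
  exact hscale _

end Energy

theorem expect_reTrace_sq_transform_add_le (k : ℕ) {c : ℕ → ℝ} (hc : ∀ i, |c i| ≤ 1)
    {F : CoinFlips k → Matrix n n ℂ} (hF : ∀ w, (F w).IsHermitian) :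
    𝔼 w, reTrace (transform k c F w * transform k c F w)
        + reTrace ((𝔼 w, F w) * 𝔼 w, F w)
      ≤ 𝔼 w, reTrace (F w * F w) := by
  induction k generalizing c with
  | zero => simp [transform_zero]
  | succ k ih =>
    set f : Bool → Matrix n n ℂ := fun b => 𝔼 w, F (vecCons b w) with hf
    set T : Bool → CoinFlips k → Matrix n n ℂ :=
      fun b => transform k (fun i => c (i + 1)) fun v => F (vecCons b v) with hT
    calc 𝔼 w, reTrace (transform (k + 1) c F w * transform (k + 1) c F w)
          + reTrace ((𝔼 w, F w) * 𝔼 w, F w)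
        = 𝔼 b, 𝔼 w, reTrace ((c 0 • (f b - 𝔼 b', f b') + T b w)
            * (c 0 • (f b - 𝔼 b', f b') + T b w)) + reTrace ((𝔼 b, f b) * 𝔼 b, f b) := by
          simp only [expect_coinFlips_succ, transform_succ, hf, hT]
      _ = (𝔼 b, reTrace ((c 0 • (f b - 𝔼 b', f b')) * (c 0 • (f b - 𝔼 b', f b')))
            + reTrace ((𝔼 b, f b) * 𝔼 b, f b)) + 𝔼 b, 𝔼 w, reTrace (T b w * T b w) := by
          simp only [expect_reTrace_sq_const_add _ (expect_transform k _ _), hT,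
            expect_add_distrib]
          ring
      _ ≤ 𝔼 b, reTrace (f b * f b) + 𝔼 b, 𝔼 w, reTrace (T b w * T b w) := by
          gcongr
          exact expect_reTrace_sq_smul_sub_add_le (hc 0) fun b => isHermitian_expect _ fun w => hF _
      _ ≤ 𝔼 w, reTrace (F w * F w) := by
          rw [expect_coinFlips_succ, ← expect_add_distrib]
          gcongr with b
          rw [add_comm]
          exact ih (fun i => hc _) fun w => hF _

end MatrixValued

/-! ### Cuculescu's construction and the weak-type inequality -/

section Cuculescu

variable {n : Type*} [Fintype n]

lemma posSemidef_mul_mul_self {q H : Matrix n n ℂ} (hq : q.IsHermitian) (hH : H.PosSemidef) :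
    (q * H * q).PosSemidef := by
  simpa only [hq.eq] using hH.mul_mul_conjTranspose_same q

lemma reTrace_mul_mul_self {q : Matrix n n ℂ} (hq : IsStarProjection q) (H : Matrix n n ℂ) :
    reTrace (q * H * q) = reTrace (q * H) := by
  rw [reTrace_mul_comm, ← Matrix.mul_assoc, hq.isIdempotentElem.eq]

lemma mul_eq_of_mul_eq {q H : Matrix n n ℂ} (hq : q.IsHermitian) (hH : H.IsHermitian)
    (h : q * H = H) : H * q = H := by
  simpa only [conjTranspose_mul, hq.eq, hH.eq] using congrArg conjTranspose h

lemma expect_mul_mul {ι : Type*} (s : Finset ι) (A B : Matrix n n ℂ) (f : ι → Matrix n n ℂ) :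
    𝔼 i ∈ s, A * f i * B = A * (𝔼 i ∈ s, f i) * B :=
  expect_map (mulRightLinearMap n ℝ B ∘ₗ mulLeftLinearMap n ℝ A) s f

variable [DecidableEq n]

lemma reTrace_mul_self_le {lam : ℝ} {H : Matrix n n ℂ} (hH : H.PosSemidef)
    (hle : (lam • (1 : Matrix n n ℂ) - H).PosSemidef) :
    reTrace (H * H) ≤ lam * reTrace H := by
  obtain ⟨W, a, rfl⟩ := exists_eq_unitaryDiag hH.1
  rw [← map_one (unitaryDiag W), ← map_smul, ← map_sub, posSemidef_unitaryDiag_iff] at hle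
  rw [posSemidef_unitaryDiag_iff] at hH
  rw [← map_mul, reTrace_unitaryDiag, reTrace_unitaryDiag, mul_sum]
  refine sum_le_sum fun i _ => mul_le_mul_of_nonneg_right ?_ (hH i)
  simpa using hle i

lemma exists_spectral_cut {lam : ℝ} (hlam : 0 ≤ lam) {H : Matrix n n ℂ} (hH : H.IsHermitian) :
    ∃ p : Matrix n n ℂ, IsStarProjection p ∧ Commute p H ∧ (∃ K, p = H * K) ∧
      (lam • (1 : Matrix n n ℂ) - (H - p * H)).PosSemidef ∧
      lam * reTrace p ≤ reTrace (p * H) ∧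
      (((2 * lam) • (1 : Matrix n n ℂ) - H).PosSemidef →
        reTrace (H * H) ≤ reTrace ((H - p * H) * (H - p * H)) + 2 * lam * reTrace (p * H)) := by
  obtain ⟨W, a, rfl⟩ := exists_eq_unitaryDiag hH
  set χ : n → ℝ := fun i => if lam < a i then 1 else 0 with hχ
  refine ⟨unitaryDiag W χ,
    isStarProjection_unitaryDiag_iff.mpr fun i => (ite_eq_or_eq _ _ _).symm, ?_,
    ⟨unitaryDiag W (χ * a⁻¹), ?_⟩, ?_, ?_, fun hle => ?_⟩
  · rw [Commute, SemiconjBy, ← map_mul, ← map_mul, mul_comm]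
  · rw [← map_mul]
    congr 1; ext i
    by_cases h : lam < a i
    · simp [hχ, h, (hlam.trans_lt h).ne']
    · simp [hχ, h]
  · rw [← map_one (unitaryDiag W), ← map_smul, ← map_mul, ← map_sub, ← map_sub,
      posSemidef_unitaryDiag_iff]
    intro i
    by_cases h : lam < a i
    · simp [hχ, h, hlam]
    · simpa [hχ, h] using not_lt.mp h
  · rw [← map_mul, reTrace_unitaryDiag, reTrace_unitaryDiag, mul_sum]
    refine sum_le_sum fun i _ => ?_
    by_cases h : lam < a i
    · simpa [hχ, h] using h.le
    · simp [hχ, h]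
  · rw [← map_one (unitaryDiag W), ← map_smul, ← map_sub, posSemidef_unitaryDiag_iff] at hle
    rw [← map_mul, ← map_mul, ← map_sub, ← map_mul, reTrace_unitaryDiag, reTrace_unitaryDiag,
      reTrace_unitaryDiag, mul_sum, ← sum_add_distrib]
    refine sum_le_sum fun i _ => ?_
    by_cases h : lam < a i
    · have hi : a i ≤ 2 * lam := by simpa using hle i
      simpa [hχ, h] using mul_le_mul_of_nonneg_right hi (hlam.trans h.le)
    · simp [hχ, h]

lemma exists_cuculescu_step {lam : ℝ} (hlam : 0 ≤ lam) {q₀ H : Matrix n n ℂ}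
    (hq₀ : IsStarProjection q₀) (hH : H.IsHermitian) (hqH : q₀ * H = H) :
    ∃ q : Matrix n n ℂ, IsStarProjection q ∧ q₀ * q = q ∧
      (lam • (1 : Matrix n n ℂ) - q * H * q).PosSemidef ∧
      lam * reTrace (q₀ - q) ≤ reTrace ((q₀ - q) * H) ∧
      (((2 * lam) • (1 : Matrix n n ℂ) - H).PosSemidef →
        reTrace (H * H) ≤ reTrace ((q * H * q) * (q * H * q))
          + 2 * lam * reTrace ((q₀ - q) * H)) := by
  obtain ⟨p, hp, hcomm, ⟨K, hK⟩, hcut, htrace, hsq⟩ := exists_spectral_cut hlam hH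
  have hq₀p : q₀ * p = p := by rw [hK, ← Matrix.mul_assoc, hqH]
  have hpq₀ : p * q₀ = p := mul_eq_of_mul_eq hq₀.isSelfAdjoint hp.isSelfAdjoint hq₀p
  have hcompress : (q₀ - p) * H * (q₀ - p) = H - p * H := by
    rw [Matrix.sub_mul, hqH, Matrix.mul_sub, Matrix.sub_mul, Matrix.sub_mul, Matrix.mul_assoc,
      mul_eq_of_mul_eq hq₀.isSelfAdjoint hH hqH, hcomm.eq, Matrix.mul_assoc H,
      hp.isIdempotentElem.eq, sub_self, sub_zero]
  refine ⟨q₀ - p, ⟨?_, hq₀.isSelfAdjoint.sub hp.isSelfAdjoint⟩, ?_, ?_, ?_, ?_⟩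
  · rw [IsIdempotentElem, Matrix.sub_mul, Matrix.mul_sub, Matrix.mul_sub, hq₀p, hpq₀,
      hp.isIdempotentElem.eq, hq₀.isIdempotentElem.eq, sub_self, sub_zero]
  · rw [Matrix.mul_sub, hq₀p, hq₀.isIdempotentElem.eq]
  · rwa [hcompress]
  · rwa [sub_sub_cancel]
  · rwa [sub_sub_cancel, hcompress]

end Cuculescu

section WeakType

variable {n Ω : Type*} [Fintype n] [Fintype Ω]

/-- Cuculescu's decomposition at height `lam` of a transform `T` of a positive field `F`, started
from a projection `q₀`: on the projections `q w ≤ q₀` the transform agrees with the centred field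
`G`, which is small in `L²`, while `q₀ - q w` has small mean trace. -/
structure CuculescuSplit (lam : ℝ) (q₀ : Matrix n n ℂ) (F T q G : Ω → Matrix n n ℂ) : Prop where
  isStarProjection : ∀ w, IsStarProjection (q w)
  mul_eq : ∀ w, q₀ * q w = q w
  isHermitian : ∀ w, (G w).IsHermitian
  compress_eq : ∀ w, q w * T w * q w = q w * G w * q w
  expect_eq_zero : 𝔼 w, G w = 0
  energy_le : 𝔼 w, reTrace (G w * G w)
      + reTrace ((q₀ * (𝔼 w, F w) * q₀) * (q₀ * (𝔼 w, F w) * q₀))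
    ≤ 2 * lam * reTrace (q₀ * (𝔼 w, F w) * q₀)
  mass_le : lam * 𝔼 w, reTrace (q₀ - q w) ≤ 𝔼 w, reTrace ((q₀ - q w) * F w)

namespace CuculescuSplit

lemma mul_mul_mul_eq {lam : ℝ} {q₀ : Matrix n n ℂ} {F T q G : Ω → Matrix n n ℂ}
    (h : CuculescuSplit lam q₀ F T q G) (hq₀ : q₀.IsHermitian) (M : Matrix n n ℂ) (w : Ω) :
    q w * M * q w = q w * (q₀ * M * q₀) * q w := by
  have hq := mul_eq_of_mul_eq hq₀ (h.isStarProjection w).isSelfAdjoint (h.mul_eq w)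
  calc q w * M * q w = (q w * q₀) * M * (q₀ * q w) := by rw [h.mul_eq, hq]
    _ = q w * (q₀ * M * q₀) * q w := by simp only [Matrix.mul_assoc]

lemma mass_step {lam : ℝ} {q₀ q₁ : Matrix n n ℂ} {F T q G : Ω → Matrix n n ℂ}
    (h : CuculescuSplit lam q₁ F T q G) [Nonempty Ω]
    (hstep : lam * reTrace (q₀ - q₁) ≤ reTrace ((q₀ - q₁) * 𝔼 w, F w)) :
    lam * 𝔼 w, reTrace (q₀ - q w) ≤ 𝔼 w, reTrace ((q₀ - q w) * F w) := by
  have hsplit : ∀ w, q₀ - q w = (q₀ - q₁) + (q₁ - q w) := fun w => by abel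
  simp only [hsplit, map_add, Matrix.add_mul, expect_add_distrib, Fintype.expect_const,
    expect_reTrace_mul_left, mul_add]
  exact add_le_add hstep h.mass_le

protected lemma succ {lam : ℝ} {q₀ : Matrix n n ℂ} (hq₀ : q₀.IsHermitian) {k : ℕ} {c : ℕ → ℝ}
    (hc : |c 0| ≤ 1) {F : CoinFlips (k + 1) → Matrix n n ℂ} (hF : ∀ w, (F w).IsHermitian)
    {H : Bool → Matrix n n ℂ} (hH : ∀ b, H b = q₀ * (𝔼 v, F (vecCons b v)) * q₀)
    {q G : Bool → CoinFlips k → Matrix n n ℂ}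
    (h : ∀ b, CuculescuSplit lam q₀ (fun v => F (vecCons b v))
      (transform k (fun i => c (i + 1)) fun v => F (vecCons b v)) (q b) (G b)) :
    CuculescuSplit lam q₀ F (transform (k + 1) c F) (fun w => q (vecHead w) (vecTail w))
      (fun w => c 0 • (H (vecHead w) - 𝔼 b, H b) + G (vecHead w) (vecTail w)) := by
  have hherm : ∀ b, (H b).IsHermitian := fun b => by
    have := isHermitian_conjTranspose_mul_mul q₀ (isHermitian_expect univ fun v => hF (vecCons b v))
    rwa [hq₀.eq, ← hH] at this
  have hmean : q₀ * (𝔼 w, F w) * q₀ = 𝔼 b, H b := by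
    simp only [expect_coinFlips_succ, ← expect_mul_mul, hH]
  refine ⟨fun w => (h _).isStarProjection _, fun w => (h _).mul_eq _, fun w => ?_, fun w => ?_, ?_,
    ?_, ?_⟩
  · exact (isHermitian_real_smul _ ((hherm _).sub (isHermitian_expect _ hherm))).add
      ((h _).isHermitian _)
  · obtain ⟨b, v, rfl⟩ : ∃ b v, w = vecCons b v := ⟨_, _, (cons_head_tail w).symm⟩
    simp only [head_cons, tail_cons]
    have hjump : H b - 𝔼 b', H b'
        = q₀ * (𝔼 v, F (vecCons b v) - 𝔼 b', 𝔼 v, F (vecCons b' v)) * q₀ := by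
      rw [Matrix.mul_sub, Matrix.sub_mul, ← expect_coinFlips_succ, hmean, hH]
    rw [transform_succ, Matrix.mul_add, Matrix.add_mul, Matrix.mul_add, Matrix.add_mul,
      (h b).compress_eq, hjump, Matrix.mul_smul, Matrix.smul_mul, Matrix.mul_smul, Matrix.smul_mul,
      (h b).mul_mul_mul_eq hq₀]
  · simp only [expect_coinFlips_succ, head_cons, tail_cons, expect_add_distrib,
      Fintype.expect_const, (h _).expect_eq_zero, ← smul_expect, expect_sub_distrib, sub_self,
      smul_zero, add_zero]
  · have hbranches : 𝔼 b, (𝔼 w, reTrace (G b w * G b w) + reTrace (H b * H b))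
        ≤ 𝔼 b, 2 * lam * reTrace (H b) :=
      expect_le_expect fun b _ => by simpa only [hH] using (h b).energy_le
    have hjumps := expect_reTrace_sq_smul_sub_add_le hc hherm
    rw [expect_add_distrib, ← mul_expect, expect_reTrace univ H] at hbranches
    simp only [hmean, expect_coinFlips_succ (fun _ => reTrace _), head_cons, tail_cons,
      expect_reTrace_sq_const_add _ (h _).expect_eq_zero, expect_add_distrib]
    linarith
  · simp only [expect_coinFlips_succ, head_cons, tail_cons, mul_expect univ (fun _ => 𝔼 _, _)]
    exact expect_le_expect fun b _ => (h b).mass_le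

variable [DecidableEq n]

protected lemma zero {lam : ℝ} (hlam : 0 ≤ lam) {q₀ : Matrix n n ℂ} (hq₀ : IsStarProjection q₀)
    {F : Ω → Matrix n n ℂ} (hF : ∀ w, (F w).PosSemidef)
    (hle : (lam • (1 : Matrix n n ℂ) - q₀ * (𝔼 w, F w) * q₀).PosSemidef) :
    CuculescuSplit lam q₀ F 0 (fun _ => q₀) 0 where
  isStarProjection _ := hq₀
  mul_eq _ := hq₀.isIdempotentElem
  isHermitian _ := isHermitian_zero
  compress_eq _ := rfl
  expect_eq_zero := expect_const_zero _
  energy_le := by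
    have hH := posSemidef_mul_mul_self hq₀.isSelfAdjoint (posSemidef_expect univ hF)
    have hnonneg := mul_nonneg hlam (reTrace_nonneg hH)
    simp only [Pi.zero_apply, mul_zero, map_zero, expect_const_zero, zero_add]
    linarith [reTrace_mul_self_le hH hle]
  mass_le := by simp

lemma exists_of_le_two_mul [Nonempty Ω] {lam : ℝ} (hlam : 0 ≤ lam) {q₀ : Matrix n n ℂ}
    (hq₀ : IsStarProjection q₀) {F T : Ω → Matrix n n ℂ} (hF : ∀ w, (F w).PosSemidef)
    (hle : ((2 * lam) • (1 : Matrix n n ℂ) - q₀ * (𝔼 w, F w) * q₀).PosSemidef)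
    (hex : ∀ q₁ : Matrix n n ℂ, IsStarProjection q₁ →
      (lam • (1 : Matrix n n ℂ) - q₁ * (𝔼 w, F w) * q₁).PosSemidef →
      ∃ q G, CuculescuSplit lam q₁ F T q G) :
    ∃ q G, CuculescuSplit lam q₀ F T q G := by
  set f := 𝔼 w, F w with hf
  have hH : (q₀ * f * q₀).PosSemidef :=
    posSemidef_mul_mul_self hq₀.isSelfAdjoint (posSemidef_expect univ hF)
  obtain ⟨q₁, hq₁, hq₀₁, hcut, htrace, hsq⟩ := exists_cuculescu_step hlam hq₀ hH.1
    (by rw [← Matrix.mul_assoc, ← Matrix.mul_assoc, hq₀.isIdempotentElem.eq])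
  have hq₁₀ := mul_eq_of_mul_eq hq₀.isSelfAdjoint hq₁.isSelfAdjoint hq₀₁
  have hcompress : q₁ * (q₀ * f * q₀) * q₁ = q₁ * f * q₁ := by
    calc q₁ * (q₀ * f * q₀) * q₁ = (q₁ * q₀) * f * (q₀ * q₁) := by simp only [Matrix.mul_assoc]
      _ = q₁ * f * q₁ := by rw [hq₀₁, hq₁₀]
  have hcut_trace : reTrace ((q₀ - q₁) * (q₀ * f * q₀)) = reTrace ((q₀ - q₁) * f) := by
    rw [← Matrix.mul_assoc, reTrace_mul_comm, ← Matrix.mul_assoc, ← Matrix.mul_assoc,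
      Matrix.mul_sub, hq₀.isIdempotentElem.eq, hq₀₁, Matrix.sub_mul, hq₀.isIdempotentElem.eq, hq₁₀]
  rw [hcompress] at hcut
  obtain ⟨q, G, h⟩ := hex q₁ hq₁ hcut
  refine ⟨q, G, h.isStarProjection, fun w => ?_, h.isHermitian, h.compress_eq, h.expect_eq_zero,
    ?_, h.mass_step (hcut_trace ▸ htrace)⟩
  · rw [← h.mul_eq w, ← Matrix.mul_assoc, hq₀₁]
  · have henergy := h.energy_le
    have hsq := hsq hle
    rw [hcompress, hcut_trace, Matrix.sub_mul, map_sub] at hsq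
    rw [← hf, reTrace_mul_mul_self hq₁] at henergy
    rw [reTrace_mul_mul_self hq₀]
    linarith

end CuculescuSplit

variable [DecidableEq n]

theorem exists_cuculescuSplit {lam : ℝ} (hlam : 0 ≤ lam) (k : ℕ) {c : ℕ → ℝ}
    (hc : ∀ i, |c i| ≤ 1) {F : CoinFlips k → Matrix n n ℂ} (hF : ∀ w, (F w).PosSemidef)
    {q₀ : Matrix n n ℂ} (hq₀ : IsStarProjection q₀)
    (hle : (lam • (1 : Matrix n n ℂ) - q₀ * (𝔼 w, F w) * q₀).PosSemidef) :
    ∃ q G, CuculescuSplit lam q₀ F (transform k c F) q G := by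
  induction k generalizing c q₀ with
  | zero => exact ⟨_, _, .zero hlam hq₀ hF hle⟩
  | succ k ih =>
    set H : Bool → Matrix n n ℂ := fun b => q₀ * (𝔼 v, F (vecCons b v)) * q₀ with hH
    have hHpos : ∀ b, (H b).PosSemidef := fun b =>
      posSemidef_mul_mul_self hq₀.isSelfAdjoint (posSemidef_expect _ fun v => hF _)
    rw [expect_coinFlips_succ, ← expect_mul_mul] at hle
    choose q G h using fun b => CuculescuSplit.exists_of_le_two_mul hlam hq₀
      (fun v => hF (vecCons b v)) (by rw [mul_smul]; exact posSemidef_two_smul_sub hHpos hle b)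
      fun q₁ hq₁ => ih (fun i => hc (i + 1)) (fun v => hF (vecCons b v)) hq₁
    exact ⟨_, _, .succ hq₀.isSelfAdjoint (hc 0) (fun w => (hF w).1) (fun b => rfl) h⟩

theorem exists_weakType_split {lam : ℝ} (hlam : 0 ≤ lam) (k : ℕ) {c : ℕ → ℝ}
    (hc : ∀ i, |c i| ≤ 1) {F : CoinFlips k → Matrix n n ℂ} (hF : ∀ w, (F w).PosSemidef) :
    ∃ q G : CoinFlips k → Matrix n n ℂ,
      (∀ w, IsStarProjection (q w)) ∧ (∀ w, (G w).IsHermitian) ∧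
      (∀ w, q w * transform k c F w * q w = q w * G w * q w) ∧
      𝔼 w, reTrace (G w * G w) ≤ 2 * lam * 𝔼 w, reTrace (F w) ∧
      lam * 𝔼 w, reTrace (1 - q w) ≤ 𝔼 w, reTrace (F w) := by
  have hmean : (𝔼 w, F w).PosSemidef := posSemidef_expect _ hF
  obtain ⟨q₁, hq₁, -, hcut, htrace, -⟩ :=
    exists_cuculescu_step hlam (.one _) hmean.1 (Matrix.one_mul _)
  obtain ⟨q, G, h⟩ := exists_cuculescuSplit hlam k hc hF hq₁ hcut
  have hcompress_le : ∀ {r M : Matrix n n ℂ}, IsStarProjection r → M.PosSemidef →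
      reTrace ((1 - r) * M) ≤ reTrace M ∧ reTrace (r * M * r) ≤ reTrace M := fun {r M} hr hM => by
    have hpos := reTrace_nonneg (posSemidef_mul_mul_self hr.isSelfAdjoint hM)
    have hpos' := reTrace_nonneg (posSemidef_mul_mul_self hr.one_sub.isSelfAdjoint hM)
    rw [reTrace_mul_mul_self hr] at hpos ⊢
    rw [reTrace_mul_mul_self hr.one_sub] at hpos'
    rw [Matrix.sub_mul, Matrix.one_mul, map_sub] at hpos' ⊢
    exact ⟨by linarith, by linarith⟩
  refine ⟨q, G, h.isStarProjection, h.isHermitian, h.compress_eq, ?_, ?_⟩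
  · have henergy := h.energy_le
    have hsq := reTrace_sq_nonneg
      (posSemidef_mul_mul_self hq₁.isSelfAdjoint hmean).1
    have hle := mul_le_mul_of_nonneg_left (hcompress_le hq₁ hmean).2 hlam
    rw [expect_reTrace univ F]
    linarith
  · exact (h.mass_step htrace).trans
      (expect_le_expect fun w _ => (hcompress_le (h.isStarProjection w) (hF w)).1)

end WeakType

section Counting

variable {n : Type*} [Fintype n]

lemma rank_add_le (A B : Matrix n n ℂ) : (A + B).rank ≤ A.rank + B.rank := by
  rw [rank, rank, rank, mulVecLin_add]
  exact (Submodule.finrank_mono (LinearMap.range_add_le _ _)).trans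
    (Submodule.finrank_add_le_finrank_add_finrank _ _)

lemma mul_eq_zero_of_add_eq_zero {p q R : Matrix n n ℂ} (hp : IsStarProjection p)
    (hq : IsStarProjection q) (hR : R.IsHermitian) (h : R * (p + q) * R = 0) :
    p * R = 0 ∧ q * R = 0 := by
  have hfactor : ∀ {r : Matrix n n ℂ}, IsStarProjection r → R * r * R = (r * R)ᴴ * (r * R) :=
    fun {r} hr => by
      have hrr : rᴴ * r = r := by
        rw [← star_eq_conjTranspose, hr.isSelfAdjoint.star_eq, hr.isIdempotentElem.eq]
      rw [conjTranspose_mul, hR.eq, Matrix.mul_assoc R rᴴ, ← Matrix.mul_assoc rᴴ, hrr,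
        Matrix.mul_assoc]
  rw [Matrix.mul_add, Matrix.add_mul, hfactor hp, hfactor hq] at h
  have htr := congrArg reTrace h
  rw [map_add, map_zero] at htr
  have hp0 := posSemidef_conjTranspose_mul_self (p * R)
  have hq0 := posSemidef_conjTranspose_mul_self (q * R)
  have hzero : ∀ {M : Matrix n n ℂ}, reTrace (Mᴴ * M) = 0 → M = 0 := fun {M} hM =>
    trace_conjTranspose_mul_self_eq_zero_iff.mp
      (Complex.ext hM
        (Complex.nonneg_iff.mp (posSemidef_conjTranspose_mul_self M).trace_nonneg).2.symm)
  exact ⟨hzero (by linarith [reTrace_nonneg hp0, reTrace_nonneg hq0]),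
    hzero (by linarith [reTrace_nonneg hp0, reTrace_nonneg hq0])⟩

lemma reTrace_mul_congr {q R A B : Matrix n n ℂ} (hqR : q * R = R) (hRq : R * q = R)
    (h : q * A * q = q * B * q) : reTrace (R * A) = reTrace (R * B) := by
  have hcompress : ∀ X : Matrix n n ℂ, reTrace (R * X) = reTrace (R * (q * X * q)) := fun X => by
    rw [← Matrix.mul_assoc, ← Matrix.mul_assoc, hRq, reTrace_mul_comm (R * X), ← Matrix.mul_assoc,
      hqR]
  rw [hcompress A, h, ← hcompress B]

lemma rank_unitaryDiag [DecidableEq n] (W : unitaryGroup n ℂ) (a : n → ℝ) :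
    ((unitaryDiag W a).rank : ℝ) = ∑ i, if a i = 0 then 0 else 1 := by
  have hW : IsUnit (W : Matrix n n ℂ).det := UnitaryGroup.det_isUnit W
  rw [unitaryDiag_apply, rank_mul_eq_left_of_isUnit_det _ _ (by simpa [det_conjTranspose] using hW),
    rank_mul_eq_right_of_isUnit_det _ _ hW, rank_diagonal, Fintype.card_subtype, card_filter]
  push_cast
  exact sum_congr rfl fun i _ => by by_cases h : a i = 0 <;> simp [h]

lemma rank_eq_reTrace {P : Matrix n n ℂ} (hP : IsStarProjection P) : (P.rank : ℝ) = reTrace P := by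
  classical
  obtain ⟨W, a, rfl⟩ := exists_eq_unitaryDiag hP.isSelfAdjoint
  rw [rank_unitaryDiag, reTrace_unitaryDiag]
  exact sum_congr rfl fun i _ => by
    rcases isStarProjection_unitaryDiag_iff.mp hP i with h | h <;> simp [h]

variable [DecidableEq n]

lemma schattenPow_eq_reTrace {p : ℝ} (hp : p ≠ 0) {P : Matrix n n ℂ} (hP : IsStarProjection P) :
    schattenPow p P = reTrace P := by
  obtain ⟨W, a, rfl⟩ := exists_eq_unitaryDiag hP.isSelfAdjoint
  rw [schattenPow_unitaryDiag, reTrace_unitaryDiag]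
  exact sum_congr rfl fun i _ => by
    rcases isStarProjection_unitaryDiag_iff.mp hP i with h | h <;> simp [h, hp]

lemma exists_kernel_projection {K : Matrix n n ℂ} (hK : K.IsHermitian) :
    ∃ R : Matrix n n ℂ, IsStarProjection R ∧ K * R = 0 ∧
      reTrace R = reTrace (1 : Matrix n n ℂ) - K.rank := by
  obtain ⟨W, κ, rfl⟩ := exists_eq_unitaryDiag hK
  refine ⟨unitaryDiag W fun i => if κ i = 0 then 1 else 0,
    isStarProjection_unitaryDiag_iff.mpr fun i => (ite_eq_or_eq _ _ _).symm, ?_, ?_⟩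
  · rw [← map_mul, ← map_zero (unitaryDiag W)]
    congr 1; ext i; simp
  · rw [← map_one (unitaryDiag W), reTrace_unitaryDiag, reTrace_unitaryDiag, rank_unitaryDiag,
      ← sum_sub_distrib]
    exact sum_congr rfl fun i _ => by by_cases h : κ i = 0 <;> simp [h]

/- The kernel of `(1 - P) + (1 - q)` is the intersection of the ranges of `P` and `q`. -/
lemma exists_inf_projection {P q : Matrix n n ℂ} (hP : IsStarProjection P)
    (hq : IsStarProjection q) :
    ∃ R : Matrix n n ℂ, IsStarProjection R ∧ P * R = R ∧ q * R = R ∧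
      reTrace P - reTrace (1 - q) ≤ reTrace R := by
  obtain ⟨R, hR, hKR, htrace⟩ := exists_kernel_projection
    (hP.one_sub.isSelfAdjoint.add hq.one_sub.isSelfAdjoint : ((1 - P) + (1 - q)).IsHermitian)
  obtain ⟨hPR, hqR⟩ := mul_eq_zero_of_add_eq_zero hP.one_sub hq.one_sub hR.isSelfAdjoint
    (by rw [Matrix.mul_assoc, hKR, Matrix.mul_zero])
  rw [Matrix.sub_mul, Matrix.one_mul, sub_eq_zero] at hPR hqR
  refine ⟨R, hR, hPR.symm, hqR.symm, ?_⟩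
  have hrank : (((1 - P) + (1 - q)).rank : ℝ) ≤ (1 - P).rank + (1 - q).rank :=
    mod_cast rank_add_le _ _
  rw [rank_eq_reTrace hP.one_sub, rank_eq_reTrace hq.one_sub, map_sub _ _ P] at hrank
  linarith

lemma reTrace_projection_mul_le {s lam : ℝ} (hs : 1 < s) (hlam : 0 < lam) {R H : Matrix n n ℂ}
    (hR : IsStarProjection R) (hH : H.IsHermitian) :
    reTrace (R * H) ≤ lam * ((1 - 1 / s) * reTrace R + 1 / s * (schattenPow s H / lam ^ s)) := by
  have hconj : s.HolderConjugate (s / (s - 1)) := .conjExponent hs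
  have hyoung := reTrace_mul_le_young hconj.symm hR.isSelfAdjoint (isHermitian_real_smul lam⁻¹ hH)
  rw [Matrix.mul_smul, map_smul, smul_eq_mul, schattenPow_smul _ _ hH,
    schattenPow_eq_reTrace hconj.symm.ne_zero hR, abs_of_pos (inv_pos.mpr hlam),
    Real.inv_rpow hlam.le, inv_mul_le_iff₀ hlam] at hyoung
  refine hyoung.trans_eq ?_
  have := hconj.ne_zero
  field_simp

lemma mul_reTrace_le_reTrace_mul_unitaryDiag {x : ℝ} {R : Matrix n n ℂ} (hR : IsStarProjection R)
    {W : unitaryGroup n ℂ} {η : n → ℝ}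
    (h : R * unitaryDiag W (fun i => if x < η i then 1 else 0) = R) :
    x * reTrace R ≤ reTrace (R * unitaryDiag W η) := by
  set χ : n → ℝ := fun i => if x < η i then 1 else 0 with hχ
  have hpos : (unitaryDiag W (χ * η - x • χ)).PosSemidef := by
    refine posSemidef_unitaryDiag_iff.mpr fun i => ?_
    by_cases h : x < η i
    · simpa [hχ, h] using h.le
    · simp [hχ, h]
  have htr := reTrace_nonneg (posSemidef_mul_mul_self hR.isSelfAdjoint hpos)
  rw [reTrace_mul_mul_self hR, map_sub, map_mul (unitaryDiag W), map_smul, Matrix.mul_sub,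
    ← Matrix.mul_assoc, h, Matrix.mul_smul, h, map_sub, map_smul, smul_eq_mul] at htr
  linarith

theorem card_eigenvalues_gt_le {s lam : ℝ} (hs : 2 ≤ s) (hlam : 0 < lam)
    {q G A B : Matrix n n ℂ} (hq : IsStarProjection q) (hG : G.IsHermitian) (hB : B.IsHermitian)
    (hAG : q * A * q = q * G * q) {W : unitaryGroup n ℂ} {η : n → ℝ}
    (hη : A + B = unitaryDiag W η) :
    ∑ i, (if 2 * lam < η i then 1 else 0 : ℝ)
      ≤ reTrace (1 - q) + reTrace (G * G) / lam ^ 2 + schattenPow s B / lam ^ s := by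
  have hP : IsStarProjection (unitaryDiag W fun i => if 2 * lam < η i then 1 else 0) :=
    isStarProjection_unitaryDiag_iff.mpr fun i => (ite_eq_or_eq _ _ _).symm
  obtain ⟨R, hR, hPR, hqR, htrace⟩ := exists_inf_projection hP hq
  rw [reTrace_unitaryDiag] at htrace
  have hRq := mul_eq_of_mul_eq hq.isSelfAdjoint hR.isSelfAdjoint hqR
  have hlower := mul_reTrace_le_reTrace_mul_unitaryDiag hR
    (mul_eq_of_mul_eq hP.isSelfAdjoint hR.isSelfAdjoint hPR)
  rw [← hη, Matrix.mul_add, map_add, reTrace_mul_congr hqR hRq hAG] at hlower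
  have hG_le := reTrace_projection_mul_le one_lt_two hlam hR hG
  have hB_le := reTrace_projection_mul_le (one_lt_two.trans_le hs) hlam hR hB
  rw [Real.rpow_two, schattenPow_two hG] at hG_le
  have hscaled : 2 * reTrace R
      ≤ ((1 - 1 / 2) * reTrace R + 1 / 2 * (reTrace (G * G) / lam ^ 2))
        + ((1 - 1 / s) * reTrace R + 1 / s * (schattenPow s B / lam ^ s)) :=
    le_of_mul_le_mul_left (by linarith) hlam
  have hR0 : 0 ≤ reTrace R := schattenPow_eq_reTrace one_ne_zero hR ▸ schattenPow_nonneg 1 R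
  have hB0 : 0 ≤ schattenPow s B / lam ^ s :=
    div_nonneg (schattenPow_nonneg _ _) (Real.rpow_nonneg hlam.le _)
  have hinv : 0 < 1 / s := by positivity
  have hinv_le : 1 / s ≤ 1 / 2 := one_div_le_one_div_of_le two_pos hs
  linarith [mul_nonneg hR0 hinv.le, mul_le_mul_of_nonneg_right hinv_le hB0]

lemma card_abs_eigenvalues_gt_le {s lam : ℝ} (hs : 2 ≤ s) (hlam : 0 < lam)
    {q G A B : Matrix n n ℂ} (hq : IsStarProjection q) (hG : G.IsHermitian) (hB : B.IsHermitian)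
    (hAG : q * A * q = q * G * q) {W : unitaryGroup n ℂ} {η : n → ℝ}
    (hη : A + B = unitaryDiag W η) :
    ∑ i, (if 2 * lam < |η i| then 1 else 0 : ℝ)
      ≤ 2 * (reTrace (1 - q) + reTrace (G * G) / lam ^ 2 + schattenPow s B / lam ^ s) := by
  have hpos := card_eigenvalues_gt_le hs hlam hq hG hB hAG hη
  have hneg := card_eigenvalues_gt_le (A := -A) (B := -B) (G := -G) (W := W) (η := -η) hs hlam hq
    hG.neg hB.neg (by simp [hAG]) (by rw [map_neg, ← hη, neg_add])
  have hB_neg : schattenPow s (-B) = schattenPow s B := by simpa using schattenPow_smul s (-1) hB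
  rw [neg_mul_neg, hB_neg] at hneg
  refine le_trans ?_ ((add_le_add hpos hneg).trans_eq (two_mul _).symm)
  rw [← sum_add_distrib]
  refine sum_le_sum fun i _ => ?_
  simp only [lt_abs, Pi.neg_apply]
  split_ifs <;> first | tauto | norm_num

lemma expect_card_abs_gt_le {s lam : ℝ} (hs : 2 ≤ s) (hlam : 0 < lam) {k : ℕ} {c : ℕ → ℝ}
    (hc : ∀ i, |c i| ≤ 1) {A B : CoinFlips k → Matrix n n ℂ} (hA : ∀ w, (A w).PosSemidef)
    (hB : ∀ w, (B w).IsHermitian) {V : CoinFlips k → unitaryGroup n ℂ} {g : CoinFlips k → n → ℝ}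
    (hg : ∀ w, transform k c A w + transform k c B w = unitaryDiag (V w) (g w)) :
    𝔼 w, ∑ i, (if 2 * lam < |g w i| then 1 else 0 : ℝ)
      ≤ 6 / lam * 𝔼 w, reTrace (A w)
        + 2 / lam ^ s * 𝔼 w, schattenPow s (transform k c B w) := by
  obtain ⟨q, G, hq, hG, hqG, henergy, hmass⟩ := exists_weakType_split hlam.le k hc hA
  calc 𝔼 w, ∑ i, (if 2 * lam < |g w i| then 1 else 0 : ℝ)
      ≤ 𝔼 w, 2 * (reTrace (1 - q w) + reTrace (G w * G w) / lam ^ 2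
          + schattenPow s (transform k c B w) / lam ^ s) :=
        expect_le_expect fun w _ => card_abs_eigenvalues_gt_le hs hlam (hq w) (hG w)
          (isHermitian_transform k c hB w) (hqG w) (hg w)
    _ = 2 * (𝔼 w, reTrace (1 - q w) + (𝔼 w, reTrace (G w * G w)) / lam ^ 2
          + (𝔼 w, schattenPow s (transform k c B w)) / lam ^ s) := by
        rw [← mul_expect, expect_add_distrib, expect_add_distrib, expect_div, expect_div]
    _ ≤ 2 * ((𝔼 w, reTrace (A w)) / lam + 2 * lam * (𝔼 w, reTrace (A w)) / lam ^ 2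
          + (𝔼 w, schattenPow s (transform k c B w)) / lam ^ s) := by
        gcongr
        rwa [le_div_iff₀' hlam]
    _ = _ := by field_simp; ring

lemma unitaryDiag_truncate (W : unitaryGroup n ℂ) (a : n → ℝ) (lam : ℝ) :
    unitaryDiag W (fun i => if lam < a i then a i else 0)
      + unitaryDiag W (fun i => if lam < a i then 0 else a i) = unitaryDiag W a := by
  have htruncate : (fun i => if lam < a i then a i else 0)
      + (fun i => if lam < a i then 0 else a i) = a := funext fun i => by
    by_cases h : lam < a i <;> simp [h]
  rw [← map_add, htruncate]

lemma expect_card_abs_gt_le_truncated {s lam M : ℝ} (hs : 2 ≤ s) (hlam : 0 < lam) {k : ℕ}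
    {c : ℕ → ℝ} (hc : ∀ i, |c i| ≤ 1)
    (hM : ∀ F : CoinFlips k → Matrix n n ℂ, (∀ w, (F w).IsHermitian) →
      𝔼 w, schattenPow s (transform k c F w) ≤ M * 𝔼 w, schattenPow s (F w))
    {W V : CoinFlips k → unitaryGroup n ℂ} {f g : CoinFlips k → n → ℝ} (hf : ∀ w, 0 ≤ f w)
    (hg : ∀ w, transform k c (fun w => unitaryDiag (W w) (f w)) w = unitaryDiag (V w) (g w)) :
    𝔼 w, ∑ i, (if 2 * lam < |g w i| then 1 else 0 : ℝ)
      ≤ 6 / lam * 𝔼 w, ∑ i, (if lam < f w i then f w i else 0)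
        + 2 * M / lam ^ s * 𝔼 w, ∑ i, (if lam < f w i then 0 else f w i ^ s) := by
  let high : CoinFlips k → Matrix n n ℂ :=
    fun w => unitaryDiag (W w) fun i => if lam < f w i then f w i else 0
  let low : CoinFlips k → Matrix n n ℂ :=
    fun w => unitaryDiag (W w) fun i => if lam < f w i then 0 else f w i
  have hhigh : ∀ w, (high w).PosSemidef := fun w =>
    posSemidef_unitaryDiag_iff.mpr fun i => ite_nonneg (hf w i) le_rfl
  have hlow : ∀ w, (low w).IsHermitian := fun w => isHermitian_unitaryDiag _ _
  have hsplit : ∀ w, transform k c high w + transform k c low w = unitaryDiag (V w) (g w) := by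
    have hlow_eq : low = fun w => unitaryDiag (W w) (f w) - high w := funext fun w =>
      eq_sub_of_add_eq' (unitaryDiag_truncate (W w) (f w) lam)
    intro w
    rw [hlow_eq, transform_sub, hg, add_sub_cancel]
  have hpow : ∀ w, schattenPow s (low w) = ∑ i, (if lam < f w i then 0 else f w i ^ s) := by
    intro w
    rw [schattenPow_unitaryDiag]
    refine sum_congr rfl fun i _ => ?_
    by_cases h : lam < f w i
    · simp [h, show s ≠ 0 by linarith]
    · simp [h, abs_of_nonneg (hf w i)]
  calc 𝔼 w, ∑ i, (if 2 * lam < |g w i| then 1 else 0 : ℝ)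
      ≤ 6 / lam * 𝔼 w, reTrace (high w)
          + 2 / lam ^ s * 𝔼 w, schattenPow s (transform k c low w) :=
        expect_card_abs_gt_le hs hlam hc hhigh hlow hsplit
    _ ≤ 6 / lam * 𝔼 w, reTrace (high w) + 2 / lam ^ s * (M * 𝔼 w, schattenPow s (low w)) := by
        gcongr
        exact hM low hlow
    _ = _ := by
        simp only [hpow]
        simp only [high, reTrace_unitaryDiag]
        ring

end Counting

/-! ### Real interpolation -/

section Marcinkiewicz

open MeasureTheory

lemma integral_indicator_Iio_rpow {r b : ℝ} (hr : -1 < r) (hb : 0 ≤ b) :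
    IntegrableOn ((Set.Iio b).indicator (· ^ r)) (Set.Ioi 0) ∧
      ∫ x in Set.Ioi 0, (Set.Iio b).indicator (· ^ r) x = b ^ (r + 1) / (r + 1) := by
  constructor
  · rw [IntegrableOn, integrable_indicator_iff measurableSet_Iio, IntegrableOn,
      Measure.restrict_restrict measurableSet_Iio, Set.inter_comm, Set.Ioi_inter_Iio]
    exact (intervalIntegrable_iff_integrableOn_Ioo_of_le hb).mp
      (intervalIntegral.intervalIntegrable_rpow' hr)
  · rw [setIntegral_indicator measurableSet_Iio, Set.Ioi_inter_Iio, ← integral_Ioc_eq_integral_Ioo,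
      ← intervalIntegral.integral_of_le hb, integral_rpow (Or.inl hr),
      Real.zero_rpow (by linarith), sub_zero]

lemma integral_indicator_Ici_rpow {r b : ℝ} (hr : r < -1) (hb : 0 < b) :
    IntegrableOn ((Set.Ici b).indicator (· ^ r)) (Set.Ioi 0) ∧
      ∫ x in Set.Ioi 0, (Set.Ici b).indicator (· ^ r) x = b ^ (r + 1) / -(r + 1) := by
  have hsubset : Set.Ioi 0 ∩ Set.Ici b = Set.Ici b :=
    Set.inter_eq_right.mpr fun x hx => hb.trans_le hx
  constructor
  · rw [IntegrableOn, integrable_indicator_iff measurableSet_Ici, IntegrableOn,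
      Measure.restrict_restrict measurableSet_Ici, Set.inter_comm, hsubset,
      ← IntegrableOn, integrableOn_Ici_iff_integrableOn_Ioi]
    exact integrableOn_Ioi_rpow_of_lt hr hb
  · rw [setIntegral_indicator measurableSet_Ici, hsubset, integral_Ici_eq_integral_Ioi,
      integral_Ioi_rpow_of_lt hr hb, div_neg, neg_div]

lemma integral_low_layer {p b : ℝ} (hp : 1 < p) (hb : 0 ≤ b) :
    IntegrableOn (fun x => b * (Set.Iio b).indicator (· ^ (p - 2)) x) (Set.Ioi 0) ∧
      ∫ x in Set.Ioi 0, b * (Set.Iio b).indicator (· ^ (p - 2)) x = b ^ p / (p - 1) := by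
  obtain ⟨hintegrable, hval⟩ := integral_indicator_Iio_rpow (show -1 < p - 2 by linarith) hb
  refine ⟨hintegrable.const_mul b, ?_⟩
  rw [integral_const_mul, hval, show p - 2 + 1 = p - 1 by ring, ← mul_div_assoc,
    ← Real.rpow_one_add' hb (by linarith), add_sub_cancel]

lemma integral_high_layer {p s b : ℝ} (hp : 0 < p) (hps : p < s) (hb : 0 ≤ b) :
    IntegrableOn (fun x => b ^ s * (Set.Ici b).indicator (· ^ (p - 1 - s)) x) (Set.Ioi 0) ∧
      ∫ x in Set.Ioi 0, b ^ s * (Set.Ici b).indicator (· ^ (p - 1 - s)) x = b ^ p / (s - p) := by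
  rcases hb.eq_or_lt with rfl | hb
  · simp [Real.zero_rpow hp.ne', Real.zero_rpow (hp.trans hps).ne']
  obtain ⟨hintegrable, hval⟩ := integral_indicator_Ici_rpow (show p - 1 - s < -1 by linarith) hb
  refine ⟨hintegrable.const_mul _, ?_⟩
  rw [integral_const_mul, hval, ← mul_div_assoc, ← Real.rpow_add hb]
  ring_nf

lemma integral_sum_layers {ι : Type*} (t : Finset ι) {h : ι → ℝ → ℝ} {v : ι → ℝ} {S : Set ℝ}
    (hv : ∀ i, IntegrableOn (h i) S ∧ ∫ x in S, h i x = v i) :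
    IntegrableOn (fun x => ∑ i ∈ t, h i x) S ∧ ∫ x in S, ∑ i ∈ t, h i x = ∑ i ∈ t, v i :=
  ⟨integrable_finsetSum _ fun i _ => (hv i).1, by
    rw [integral_finsetSum _ fun i _ => (hv i).1]
    exact sum_congr rfl fun i _ => (hv i).2⟩

lemma rpow_mul_distribution_le {ι : Type*} [Fintype ι] {f g : ι → ℝ} {p s A B x : ℝ} (hx : 0 < x)
    (h : ∑ i, (if 2 * x < g i then 1 else 0 : ℝ) ≤ A / x * ∑ i, (if x < f i then f i else 0)
      + B / x ^ s * ∑ i, (if x < f i then 0 else f i ^ s)) :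
    ∑ i, (Set.Iio (g i / 2)).indicator (· ^ (p - 1)) x
      ≤ A * ∑ i, f i * (Set.Iio (f i)).indicator (· ^ (p - 2)) x
        + B * ∑ i, f i ^ s * (Set.Ici (f i)).indicator (· ^ (p - 1 - s)) x := by
  have hpred : x ^ (p - 2) = x ^ (p - 1) / x := by
    rw [← Real.rpow_sub_one hx.ne']; ring_nf
  have hcard : ∑ i, (Set.Iio (g i / 2)).indicator (· ^ (p - 1)) x
      = x ^ (p - 1) * ∑ i, (if 2 * x < g i then 1 else 0) := by
    simp only [Set.indicator_apply, Set.mem_Iio, lt_div_iff₀' (two_pos (α := ℝ)), mul_sum, mul_ite,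
      mul_one, mul_zero]
  have hlow : ∑ i, f i * (Set.Iio (f i)).indicator (· ^ (p - 2)) x
      = x ^ (p - 1) / x * ∑ i, (if x < f i then f i else 0) := by
    simp only [Set.indicator_apply, Set.mem_Iio, hpred, mul_comm (x ^ (p - 1) / x),
      sum_mul, mul_ite, ite_mul, mul_zero, zero_mul]
  have hhigh : ∑ i, f i ^ s * (Set.Ici (f i)).indicator (· ^ (p - 1 - s)) x
      = x ^ (p - 1) / x ^ s * ∑ i, (if x < f i then 0 else f i ^ s) := by
    rw [mul_sum]
    refine sum_congr rfl fun i _ => ?_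
    by_cases hxi : x < f i
    · simp [hxi]
    · simp [hxi, not_lt.mp hxi, Real.rpow_sub hx (p - 1) s, mul_comm]
  rw [hcard, hlow, hhigh]
  exact (mul_le_mul_of_nonneg_left h (Real.rpow_nonneg hx.le _)).trans_eq (by ring)

theorem sum_rpow_le_of_distribution_le {ι : Type*} [Fintype ι] {f g : ι → ℝ} (hf : 0 ≤ f)
    (hg : 0 ≤ g) {p s A B : ℝ} (hp : 1 < p) (hps : p < s)
    (h : ∀ x, 0 < x → ∑ i, (if 2 * x < g i then 1 else 0 : ℝ)
      ≤ A / x * ∑ i, (if x < f i then f i else 0)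
        + B / x ^ s * ∑ i, (if x < f i then 0 else f i ^ s)) :
    ∑ i, g i ^ p ≤ 2 ^ p * p * (A / (p - 1) + B / (s - p)) * ∑ i, f i ^ p := by
  have hcard := integral_sum_layers univ fun i =>
    integral_indicator_Iio_rpow (show -1 < p - 1 by linarith) (div_nonneg (hg i) two_pos.le)
  have hlow := integral_sum_layers univ fun i => integral_low_layer hp (hf i)
  have hhigh := integral_sum_layers univ fun i => integral_high_layer (by linarith) hps (hf i)
  have hintegral := setIntegral_mono_on hcard.1 ((hlow.1.const_mul A).add (hhigh.1.const_mul B))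
    measurableSet_Ioi fun x hx => rpow_mul_distribution_le hx (h x hx)
  simp only [Pi.add_apply] at hintegral
  rw [hcard.2, integral_add (hlow.1.const_mul A) (hhigh.1.const_mul B), integral_const_mul,
    integral_const_mul, hlow.2, hhigh.2, ← sum_div, ← sum_div,
    ← sum_div, sub_add_cancel] at hintegral
  have hscale : ∑ i, (g i / 2) ^ p = (∑ i, g i ^ p) / 2 ^ p := by
    rw [sum_div]
    exact sum_congr rfl fun i _ => Real.div_rpow (hg i) two_pos.le p
  rw [hscale, div_div, div_le_iff₀' (by positivity)] at hintegral
  exact hintegral.trans_eq (by ring)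

end Marcinkiewicz

section StrongType

variable {n : Type*} [Fintype n]

lemma expect_sum_eq_sum_div_card {k : ℕ} (h : CoinFlips k → n → ℝ) :
    𝔼 w, ∑ i, h w i = (∑ x : CoinFlips k × n, h x.1 x.2) / Fintype.card (CoinFlips k) := by
  rw [Fintype.expect_eq_sum_div_card, Fintype.sum_prod_type]

variable [DecidableEq n]

theorem expect_schattenPow_transform_le_of_posSemidef {s p M : ℝ} (hs : 2 ≤ s) (hp : 1 < p)
    (hps : p < s) {k : ℕ} {c : ℕ → ℝ} (hc : ∀ i, |c i| ≤ 1)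
    (hM : ∀ F : CoinFlips k → Matrix n n ℂ, (∀ w, (F w).IsHermitian) →
      𝔼 w, schattenPow s (transform k c F w) ≤ M * 𝔼 w, schattenPow s (F w))
    {F : CoinFlips k → Matrix n n ℂ} (hF : ∀ w, (F w).PosSemidef) :
    𝔼 w, schattenPow p (transform k c F w)
      ≤ 2 ^ p * p * (6 / (p - 1) + 2 * M / (s - p)) * 𝔼 w, schattenPow p (F w) := by
  choose W f hWf using fun w => exists_eq_unitaryDiag (hF w).isHermitian
  choose V g hVg using fun w =>
    exists_eq_unitaryDiag (isHermitian_transform k c (fun w => (hF w).isHermitian) w)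
  have hf : ∀ w, 0 ≤ f w := fun w => posSemidef_unitaryDiag_iff.mp (hWf w ▸ hF w)
  obtain rfl : F = fun w => unitaryDiag (W w) (f w) := funext hWf
  have hcard : (0 : ℝ) < Fintype.card (CoinFlips k) := by positivity
  have hsum : ∑ x : CoinFlips k × n, |g x.1 x.2| ^ p
      ≤ 2 ^ p * p * (6 / (p - 1) + 2 * M / (s - p)) * ∑ x : CoinFlips k × n, f x.1 x.2 ^ p := by
    refine sum_rpow_le_of_distribution_le (fun x : CoinFlips k × n => hf x.1 x.2)
      (fun _ => abs_nonneg _) hp hps fun x hx => ?_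
    have hdistribution := expect_card_abs_gt_le_truncated hs hx hc hM hf hVg
    simp only [expect_sum_eq_sum_div_card, ← mul_div_assoc, ← add_div] at hdistribution
    exact (div_le_div_iff_of_pos_right hcard).mp hdistribution
  simp only [hVg, schattenPow_unitaryDiag, expect_sum_eq_sum_div_card, ← mul_div_assoc,
    abs_of_nonneg (hf _ _)]
  exact div_le_div_of_nonneg_right hsum hcard.le

end StrongType

/-! ### Bounds for dyadic martingale transforms -/

section TransformBound

variable {n : Type*} [Fintype n] [DecidableEq n] {k : ℕ} {c : ℕ → ℝ} {p q K M : ℝ}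

lemma le_rpow_mul_of_young {N X : ℝ} (hpq : p.HolderConjugate q) (hK : 0 < K)
    (h : K * X ≤ K * (K ^ p * N / p + X / q)) : X ≤ K ^ p * N := by
  have hX : X = X / p + X / q := by
    rw [div_eq_mul_inv, div_eq_mul_inv, ← mul_add, hpq.inv_add_inv_eq_one, mul_one]
  have h := le_of_mul_le_mul_left h hK
  exact (div_le_div_iff_of_pos_right hpq.pos).mp (by linarith)

/-- The transform with coefficients `c` has norm at most `K` on `L_p(S_p)`, in Young form: the
products of norms in the duality pairing are replaced by `‖F‖^p / p + ‖B‖^q / q`, so that only the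
`p`-th and `q`-th powers `schattenPow` of Schatten norms occur. -/
def TransformBound (n : Type*) [Fintype n] [DecidableEq n] (k : ℕ) (c : ℕ → ℝ) (p q K : ℝ) : Prop :=
  ∀ F B : CoinFlips k → Matrix n n ℂ, (∀ w, (F w).IsHermitian) → (∀ w, (B w).IsHermitian) →
    𝔼 w, reTrace (transform k c F w * B w)
      ≤ K * ((𝔼 w, schattenPow p (F w)) / p + (𝔼 w, schattenPow q (B w)) / q)

lemma TransformBound.symm (h : TransformBound n k c p q K) : TransformBound n k c q p K :=
  fun F B hF hB => by
    rw [expect_reTrace_transform_mul, add_comm]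
    simpa only [reTrace_mul_comm] using h B F hB hF

lemma TransformBound.expect_schattenPow_le (hpq : p.HolderConjugate q) (hK : 0 < K)
    (h : TransformBound n k c p q K) {F : CoinFlips k → Matrix n n ℂ}
    (hF : ∀ w, (F w).IsHermitian) :
    𝔼 w, schattenPow p (transform k c F w) ≤ K ^ p * 𝔼 w, schattenPow p (F w) := by
  choose B hB hdual hpow using fun w =>
    exists_reTrace_mul_eq_schattenPow hpq (isHermitian_transform k c hF w)
  have hbound := h (fun w => K • F w) B (fun w => isHermitian_real_smul K (hF w)) hB
  have hsmul : ∀ w, transform k c (fun w => K • F w) w = K • transform k c F w :=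
    transform_map (LinearMap.lsmul ℝ _ K) k c F
  simp only [hsmul, Matrix.smul_mul, map_smul, smul_eq_mul, hdual, hpow,
    fun w => schattenPow_smul p K (hF w), abs_of_pos hK, ← mul_expect] at hbound
  exact le_rpow_mul_of_young hpq hK hbound

lemma expect_reTrace_transform_mul_le (hpq : p.HolderConjugate q) (hM : 1 ≤ M)
    {F B : CoinFlips k → Matrix n n ℂ} (hF : ∀ w, (F w).IsHermitian)
    (hB : ∀ w, (B w).IsHermitian)
    (h : 𝔼 w, schattenPow p (transform k c F w) ≤ M * 𝔼 w, schattenPow p (F w)) :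
    𝔼 w, reTrace (transform k c F w * B w)
      ≤ M * ((𝔼 w, schattenPow p (F w)) / p + (𝔼 w, schattenPow q (B w)) / q) := by
  have hp := hpq.pos
  have hM₀ : 0 < M := one_pos.trans_le hM
  have hscale : M⁻¹ ^ p ≤ M⁻¹ :=
    (Real.rpow_le_rpow_of_exponent_ge (inv_pos.mpr hM₀) (inv_le_one_of_one_le₀ hM)
      hpq.lt.le).trans_eq (Real.rpow_one _)
  have hyoung : ∀ w, reTrace (transform k c F w * B w)
      ≤ schattenPow p (transform k c F w) / p + M * (schattenPow q (B w) / q) := fun w => by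
    have hT := isHermitian_transform k c hF w
    have h := reTrace_mul_le_young hpq (isHermitian_real_smul M⁻¹ hT) (hB w)
    rw [Matrix.smul_mul, map_smul, smul_eq_mul, schattenPow_smul p _ hT,
      abs_of_pos (inv_pos.mpr hM₀), inv_mul_le_iff₀ hM₀] at h
    have := schattenPow_nonneg p (transform k c F w)
    calc _ ≤ M * (M⁻¹ ^ p * schattenPow p (transform k c F w) / p + schattenPow q (B w) / q) := h
      _ ≤ M * (M⁻¹ * schattenPow p (transform k c F w) / p + schattenPow q (B w) / q) := by gcongr
      _ = _ := by field_simp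
  calc 𝔼 w, reTrace (transform k c F w * B w)
      ≤ (𝔼 w, schattenPow p (transform k c F w)) / p + M * ((𝔼 w, schattenPow q (B w)) / q) := by
        rw [expect_div, expect_div, mul_expect, ← expect_add_distrib]
        exact expect_le_expect fun w _ => hyoung w
    _ ≤ M * (𝔼 w, schattenPow p (F w)) / p + M * ((𝔼 w, schattenPow q (B w)) / q) := by gcongr
    _ = _ := by ring

lemma transformBound_of_posSemidef (hpq : p.HolderConjugate q) (hM : 1 ≤ M)
    (h : ∀ F : CoinFlips k → Matrix n n ℂ, (∀ w, (F w).PosSemidef) →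
      𝔼 w, schattenPow p (transform k c F w) ≤ M * 𝔼 w, schattenPow p (F w)) :
    TransformBound n k c p q (2 * M) := fun F B hF hB => by
  choose P Q hP hQ hPQ hpow using fun w => exists_posSemidef_sub hpq.ne_zero (hF w)
  have hP_le := expect_reTrace_transform_mul_le hpq hM (fun w => (hP w).isHermitian) hB (h P hP)
  have hQ_le := expect_reTrace_transform_mul_le hpq hM (fun w => (hQ w).isHermitian)
    (fun w => (hB w).neg) (h Q hQ)
  have hneg : ∀ w, schattenPow q (-B w) = schattenPow q (B w) := fun w => by
    simpa using schattenPow_smul q (-1) (hB w)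
  have hsum : 𝔼 w, schattenPow p (F w) = 𝔼 w, schattenPow p (P w) + 𝔼 w, schattenPow p (Q w) := by
    simp only [← hpow, expect_add_distrib]
  have hF_eq : F = fun w => P w - Q w := funext hPQ
  have hpairing : 𝔼 w, reTrace (transform k c F w * B w)
      = 𝔼 w, reTrace (transform k c P w * B w) + 𝔼 w, reTrace (transform k c Q w * -B w) := by
    simp only [hF_eq, transform_sub, Matrix.sub_mul, Matrix.mul_neg, map_sub, map_neg,
      expect_sub_distrib, expect_neg_distrib]
    exact sub_eq_add_neg _ _
  simp only [hneg] at hQ_le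
  have hpos : 0 ≤ M * ((𝔼 w, schattenPow p (F w)) / p) := by
    have := expect_nonneg fun w (_ : w ∈ univ) => schattenPow_nonneg p (F w)
    have := hpq.pos
    positivity
  rw [hpairing]
  refine (add_le_add hP_le hQ_le).trans ?_
  rw [hsum] at hpos ⊢
  rw [add_div] at hpos ⊢
  linarith

lemma two_rpow_mul_le_eight (hp : 0 ≤ p) (hp₂ : p ≤ 2) : 2 ^ p * p ≤ 8 :=
  calc (2 : ℝ) ^ p * p ≤ 2 ^ (2 : ℝ) * 2 := by gcongr; exact one_le_two
    _ = 8 := by norm_num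

lemma transformBound_of_exponent_gt {s N : ℝ} (hpq : p.HolderConjugate q) (hp : p ≤ 2)
    (hs : 2 ≤ s) (hps : p < s) (hc : ∀ i, |c i| ≤ 1) (hN₀ : 0 ≤ N)
    (hN : ∀ F : CoinFlips k → Matrix n n ℂ, (∀ w, (F w).IsHermitian) →
      𝔼 w, schattenPow s (transform k c F w) ≤ N * 𝔼 w, schattenPow s (F w))
    (hM : 1 ≤ M) (hNM : 6 / (p - 1) + 2 * N / (s - p) ≤ M) :
    TransformBound n k c p q (2 * (8 * M)) :=
  transformBound_of_posSemidef hpq (by linarith) fun F hF => by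
    have hnonneg := expect_nonneg fun w (_ : w ∈ univ) => schattenPow_nonneg p (F w)
    calc 𝔼 w, schattenPow p (transform k c F w)
        ≤ 2 ^ p * p * (6 / (p - 1) + 2 * N / (s - p)) * 𝔼 w, schattenPow p (F w) :=
          expect_schattenPow_transform_le_of_posSemidef hs hpq.lt hps hc hN hF
      _ ≤ 8 * M * 𝔼 w, schattenPow p (F w) := by
          have hfactor : 0 ≤ 6 / (p - 1) + 2 * N / (s - p) :=
            add_nonneg (div_nonneg (by norm_num) (sub_nonneg.mpr hpq.lt.le))
              (div_nonneg (mul_nonneg two_pos.le hN₀) (sub_nonneg.mpr hps.le))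
          gcongr
          exact two_rpow_mul_le_eight hpq.nonneg hp

lemma expect_schattenPow_two_transform_le (hc : ∀ i, |c i| ≤ 1)
    {F : CoinFlips k → Matrix n n ℂ} (hF : ∀ w, (F w).IsHermitian) :
    𝔼 w, schattenPow 2 (transform k c F w) ≤ 𝔼 w, schattenPow 2 (F w) := by
  simp only [fun w => schattenPow_two (isHermitian_transform k c hF w),
    fun w => schattenPow_two (hF w)]
  exact (le_add_of_nonneg_right (reTrace_sq_nonneg (isHermitian_expect _ hF))).trans
    (expect_reTrace_sq_transform_add_le k hc hF)

lemma expect_schattenPow_four_transform_le (hc : ∀ i, |c i| ≤ 1)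
    {F : CoinFlips k → Matrix n n ℂ} (hF : ∀ w, (F w).IsHermitian) :
    𝔼 w, schattenPow 4 (transform k c F w) ≤ 336 ^ (4 : ℝ) * 𝔼 w, schattenPow 4 (F w) := by
  have hpq : (4 / 3 : ℝ).HolderConjugate 4 := Real.holderConjugate_iff.mpr (by norm_num)
  have hbound : TransformBound n k c (4 / 3) 4 (2 * (8 * 21)) :=
    transformBound_of_exponent_gt (s := 2) (N := 1) hpq (by norm_num) le_rfl (by norm_num) hc
      zero_le_one (fun F hF => by simpa using expect_schattenPow_two_transform_le hc hF)
      (by norm_num) (by norm_num)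
  norm_num at hbound
  exact hbound.symm.expect_schattenPow_le hpq.symm (by norm_num) hF

/-- The absolute constant of the martingale transform inequality `transformBound`. Here
`336 = 2 * (8 * 21)` is the constant at the exponent `4 / 3`, which interpolation with `L²` gives as
`21 = 6 / (4 / 3 - 1) + 2 / (2 - 4 / 3)`. -/
noncomputable def transformConst : ℝ := 2 * (8 * (6 + 336 ^ (4 : ℝ)))

lemma transformConst_pos : 0 < transformConst := by
  rw [transformConst]; positivity

lemma transformBound_of_le_two (hpq : p.HolderConjugate q) (hp : p ≤ 2) (hc : ∀ i, |c i| ≤ 1) :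
    TransformBound n k c p q (transformConst * (p * q)) := by
  have hp_pred : 0 < p - 1 := sub_pos.mpr hpq.lt
  have hmul_eq_add : p * q = p + q := hpq.mul_eq_add
  have hinv : 1 / (p - 1) ≤ p * q := by
    rw [hpq.conjugate_eq, ← mul_div_assoc]
    gcongr
    nlinarith
  have hq : 2 ≤ p * q * (4 - p) := by
    rw [hmul_eq_add]; nlinarith [hpq.lt, hpq.symm.lt]
  have hrewrite : transformConst * (p * q) = 2 * (8 * ((6 + 336 ^ (4 : ℝ)) * (p * q))) := by
    rw [transformConst]; ring
  have hpow : (0 : ℝ) < 336 ^ (4 : ℝ) := by positivity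
  rw [hrewrite]
  refine transformBound_of_exponent_gt hpq hp (by norm_num) (by linarith) hc hpow.le
    (fun F hF => expect_schattenPow_four_transform_le hc hF) (by nlinarith [hpq.symm.lt]) ?_
  rw [add_mul]
  gcongr ?_ + ?_
  · rw [div_eq_mul_one_div]
    gcongr
  · rw [div_le_iff₀ (by linarith), mul_comm 2, mul_assoc]
    gcongr

theorem transformBound (hpq : p.HolderConjugate q) (hc : ∀ i, |c i| ≤ 1) :
    TransformBound n k c p q (transformConst * (p * q)) := by
  rcases le_total p 2 with hp | hp
  · exact transformBound_of_le_two hpq hp hc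
  · have hq : q ≤ 2 := by nlinarith [hpq.mul_eq_add, hpq.symm.lt]
    rw [mul_comm p q]
    exact (transformBound_of_le_two hpq.symm hq hc).symm

end TransformBound

/-! ### Schur multipliers -/

section SchurBound

variable {n : Type*} [Fintype n]

lemma reTrace_hadamard_mul (m : Matrix n n ℝ) (A B : Matrix n n ℂ) :
    reTrace (m.map Complex.ofReal ⊙ A * B) = ∑ j, ∑ l, m j l * (A j l * B l j).re := by
  simp only [reTrace_apply, trace, diag_apply, mul_apply, hadamard_apply, map_apply, Complex.re_sum,
    mul_assoc, Complex.re_ofReal_mul]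

variable [DecidableEq n] {p q K K' : ℝ} {m m' : Matrix n n ℝ}

/-- The Schur multiplier `A ↦ m ⊙ A` has norm at most `K` on Hermitian matrices in the Schatten
class `S_p`, in the Young form also used in `TransformBound`. -/
def SchurBound (p q K : ℝ) (m : Matrix n n ℝ) : Prop :=
  ∀ A B : Matrix n n ℂ, A.IsHermitian → B.IsHermitian →
    reTrace (m.map Complex.ofReal ⊙ A * B) ≤ K * (schattenPow p A / p + schattenPow q B / q)

lemma SchurBound.of_tendsto {ι : Type*} {l : Filter ι} [l.NeBot] {M : ι → Matrix n n ℝ}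
    (h : ∀ i, SchurBound p q K (M i))
    (hlim : ∀ j k, Filter.Tendsto (fun i => M i j k) l (nhds (m j k))) : SchurBound p q K m :=
  fun A B hA hB => by
    have htrace : Filter.Tendsto (fun i => reTrace ((M i).map Complex.ofReal ⊙ A * B)) l
        (nhds (reTrace (m.map Complex.ofReal ⊙ A * B))) := by
      simp only [reTrace_hadamard_mul]
      exact tendsto_finsetSum _ fun j _ => tendsto_finsetSum _ fun k _ => (hlim j k).mul_const _
    exact le_of_tendsto' htrace fun i => h i A B hA hB

lemma SchurBound.add (h : SchurBound p q K m) (h' : SchurBound p q K' m') :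
    SchurBound p q (K + K') (m + m') := fun A B hA hB => by
  have := add_le_add (h A B hA hB) (h' A B hA hB)
  simpa only [reTrace_hadamard_mul, Matrix.add_apply, add_mul, sum_add_distrib] using this

lemma SchurBound.smul (a : ℝ) (h : SchurBound p q K m) : SchurBound p q (|a| * K) (a • m) := by
  have hsmul : ∀ (b : ℝ) (A B : Matrix n n ℂ), reTrace ((b • m).map Complex.ofReal ⊙ A * B)
      = b * reTrace (m.map Complex.ofReal ⊙ A * B) := fun b A B => by
    simp only [reTrace_hadamard_mul, Matrix.smul_apply, smul_eq_mul, mul_sum, mul_assoc]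
  intro A B hA hB
  rw [hsmul, mul_assoc]
  rcases le_total 0 a with ha | ha
  · rw [abs_of_nonneg ha]
    exact mul_le_mul_of_nonneg_left (h A B hA hB) ha
  · have hneg := h A (-B) hA hB.neg
    rw [Matrix.mul_neg, map_neg, ← neg_one_smul ℝ B, schattenPow_smul q _ hB, abs_neg, abs_one,
      Real.one_rpow, one_mul] at hneg
    rw [abs_of_nonpos ha, ← neg_mul_neg]
    exact mul_le_mul_of_nonneg_left hneg (neg_nonneg.mpr ha)

lemma SchurBound.mono (hp : 0 < p) (hq : 0 < q) (hK : K ≤ K') (h : SchurBound p q K m) :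
    SchurBound p q K' m := fun A B hA hB => by
  have := schattenPow_nonneg p A
  have := schattenPow_nonneg q B
  exact (h A B hA hB).trans (by gcongr)

lemma schurBound_one (hpq : p.HolderConjugate q) : SchurBound p q 1 (of fun _ _ : n => 1) :=
  fun A B hA hB => by
    have hone : (of fun _ _ : n => (1 : ℝ)).map Complex.ofReal ⊙ A = A := by ext; simp
    rw [hone, one_mul]
    exact reTrace_mul_le_young hpq hA hB

lemma SchurBound.intervalIntegral {M : ℝ → Matrix n n ℝ} {a b : ℝ} (hab : a ≤ b)
    (h : ∀ θ, SchurBound p q K (M θ)) (hM : ∀ j k, Continuous fun θ => M θ j k) :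
    SchurBound p q ((b - a) * K) (of fun j k => ∫ θ in a..b, M θ j k) := fun A B hA hB => by
  have hcont : ∀ j k, Continuous fun θ => M θ j k * (A j k * B k j).re := fun j k =>
    (hM j k).mul continuous_const
  have hrow : ∀ j, Continuous fun θ => ∑ k, M θ j k * (A j k * B k j).re := fun j =>
    continuous_finsetSum _ fun k _ => hcont j k
  have hsum : Continuous fun θ => ∑ j, ∑ k, M θ j k * (A j k * B k j).re :=
    continuous_finsetSum _ fun j _ => hrow j
  have hreTrace : reTrace ((of fun j k => ∫ θ in a..b, M θ j k).map Complex.ofReal ⊙ A * B)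
      = ∫ θ in a..b, reTrace ((M θ).map Complex.ofReal ⊙ A * B) := by
    simp only [reTrace_hadamard_mul, of_apply]
    rw [intervalIntegral.integral_finsetSum fun j _ => (hrow j).intervalIntegrable _ _]
    refine sum_congr rfl fun j _ => ?_
    rw [intervalIntegral.integral_finsetSum fun k _ => (hcont j k).intervalIntegrable _ _]
    simp only [intervalIntegral.integral_mul_const]
  calc reTrace ((of fun j k => ∫ θ in a..b, M θ j k).map Complex.ofReal ⊙ A * B)
      ≤ ∫ _ in a..b, K * (schattenPow p A / p + schattenPow q B / q) := by
        rw [hreTrace]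
        refine intervalIntegral.integral_mono_on hab ?_ intervalIntegrable_const
          fun θ _ => h θ A B hA hB
        simpa only [reTrace_hadamard_mul] using hsum.intervalIntegrable a b
    _ = (b - a) * K * (schattenPow p A / p + schattenPow q B / q) := by
        rw [intervalIntegral.integral_const, smul_eq_mul, mul_assoc]

lemma SchurBound.schattenPow_le (hpq : p.HolderConjugate q) (hK : 0 < K) (h : SchurBound p q K m)
    {Z : Matrix n n ℂ} (hZ : Z.IsHermitian) (hm : (m.map Complex.ofReal ⊙ Z).IsHermitian) :
    schattenPow p (m.map Complex.ofReal ⊙ Z) ≤ K ^ p * schattenPow p Z := by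
  obtain ⟨B, hB, hdual, hpow⟩ := exists_reTrace_mul_eq_schattenPow hpq hm
  have hbound := h (K • Z) B (isHermitian_real_smul K hZ) hB
  rw [hadamard_smul, Matrix.smul_mul, map_smul, smul_eq_mul, hdual, hpow, schattenPow_smul p K hZ,
    abs_of_pos hK] at hbound
  exact le_rpow_mul_of_young hpq hK hbound

end SchurBound

section Characters

variable {k : ℕ} {c : ℕ → ℝ}

/-- The random character `∏ᵢ exp (±√-1 t i)`, the `i`-th sign being the `i`-th coin flip. -/
noncomputable def character (t : ℕ → ℝ) (w : CoinFlips k) : Circle :=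
  ∏ i, Circle.exp (bif w i then t i else -t i)

lemma character_vecCons (t : ℕ → ℝ) (b : Bool) (w : CoinFlips k) :
    character t (vecCons b w)
      = Circle.exp (bif b then t 0 else -t 0) * character (fun i => t (i + 1)) w := by
  simp [character, Fin.prod_univ_succ]

lemma character_sub (s t : ℕ → ℝ) (w : CoinFlips k) :
    character (fun i => s i - t i) w = character s w / character t w := by
  rw [character, character, character, ← prod_div_distrib]
  refine prod_congr rfl fun i _ => ?_
  rw [← Circle.exp_sub]
  cases w i <;> simp [div_eq_mul_inv, mul_comm]

lemma expect_exp_sign (t : ℝ) :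
    𝔼 b : Bool, (Circle.exp (bif b then t else -t) : ℂ) = Real.cos t := by
  rw [Fintype.expect_eq_sum_div_card, Fintype.sum_bool]
  simp [Circle.coe_exp, Complex.cos, Complex.exp_neg]

lemma expect_character (t : ℕ → ℝ) :
    𝔼 w : CoinFlips k, (character t w : ℂ) = ∏ i ∈ range k, Real.cos (t i) := by
  induction k generalizing t with
  | zero => simp [character]
  | succ k ih =>
    simp only [expect_coinFlips_succ, character_vecCons, Circle.coe_mul, ← mul_expect, ih,
      ← expect_mul, expect_exp_sign]
    rw [prod_range_succ', Complex.ofReal_mul, mul_comm]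

lemma expect_inv_exp_sign (t : ℝ) :
    𝔼 b : Bool, (Circle.exp (bif b then t else -t) : ℂ)⁻¹ = Real.cos t := by
  rw [← Real.cos_neg, ← expect_exp_sign]
  refine expect_congr rfl fun b _ => ?_
  cases b <;> simp

lemma expect_inv_character (t : ℕ → ℝ) :
    𝔼 w : CoinFlips k, (character t w : ℂ)⁻¹ = ∏ i ∈ range k, Real.cos (t i) := by
  have hinv : ∀ w : CoinFlips k, (character t w : ℂ)⁻¹ = character (fun i => 0 - t i) w := by
    intro w
    rw [character_sub]
    simp [character]
  simp only [hinv, expect_character, zero_sub, Real.cos_neg]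

/-- The Fourier multiplier symbol of the martingale transform with coefficients `c`: the average of
`(character t)⁻¹ * transform k c (character t)`. -/
noncomputable def transformSymbol : (k : ℕ) → (ℕ → ℝ) → (ℕ → ℝ) → ℝ
  | 0, _, _ => 0
  | k + 1, c, t => c 0 * Real.sin (t 0) ^ 2 * (∏ i ∈ range k, Real.cos (t (i + 1))) ^ 2
      + transformSymbol k (fun i => c (i + 1)) (fun i => t (i + 1))

lemma inv_character_mul_transform_vecCons (c t : ℕ → ℝ) (b : Bool) (w : CoinFlips k) :
    (character t (vecCons b w) : ℂ)⁻¹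
        * transform (k + 1) c (fun v => (character t v : ℂ)) (vecCons b w)
      = c 0 * (∏ i ∈ range k, Real.cos (t (i + 1)) : ℝ)
          * (1 - (Circle.exp (bif b then t 0 else -t 0) : ℂ)⁻¹ * Real.cos (t 0))
          * (character (fun i => t (i + 1)) w : ℂ)⁻¹
        + (character (fun i => t (i + 1)) w : ℂ)⁻¹
          * transform k (fun i => c (i + 1))
              (fun v => (character (fun i => t (i + 1)) v : ℂ)) w := by
  have hmap : ∀ z : ℂ, transform k (fun i => c (i + 1))
        (fun v => z * (character (fun i => t (i + 1)) v : ℂ)) w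
      = z * transform k (fun i => c (i + 1)) (fun v => (character (fun i => t (i + 1)) v : ℂ)) w :=
    fun z => transform_map (LinearMap.mulLeft ℝ z) k _ _ w
  simp only [transform_succ, character_vecCons, Circle.coe_mul, hmap, ← mul_expect,
    expect_character, ← expect_mul, expect_exp_sign, Complex.real_smul]
  have := (Circle.exp (bif b then t 0 else -t 0)).coe_ne_zero
  have := (character (fun i => t (i + 1)) w).coe_ne_zero
  field_simp

lemma expect_inv_character_mul_transform (c t : ℕ → ℝ) :
    𝔼 w : CoinFlips k, (character t w : ℂ)⁻¹ * transform k c (fun v => (character t v : ℂ)) w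
      = transformSymbol k c t := by
  induction k generalizing c t with
  | zero => simp [transform_zero, transformSymbol]
  | succ k ih =>
    simp only [expect_coinFlips_succ, inv_character_mul_transform_vecCons, expect_add_distrib, ih,
      ← mul_expect, expect_inv_character, Fintype.expect_const]
    rw [← expect_mul, ← mul_expect, expect_sub_distrib, ← expect_mul, expect_inv_exp_sign,
      Fintype.expect_const, transformSymbol, Real.sin_sq]
    push_cast
    ring

end Characters

section TransformMultiplier

variable {n : Type*} [Fintype n] [DecidableEq n] {k : ℕ} {c : ℕ → ℝ} {p q : ℝ}

/-- The diagonal unitary whose `j`-th diagonal entry is the character with frequencies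
`i ↦ x i j`. -/
noncomputable def characterUnitary (x : ℕ → n → ℝ) (w : CoinFlips k) : unitaryGroup n ℂ :=
  ⟨diagonal fun j => (character (fun i => x i j) w : ℂ), by
    rw [mem_unitaryGroup_iff, star_eq_conjTranspose, diagonal_conjTranspose, diagonal_mul_diagonal,
      ← diagonal_one]
    refine congrArg _ (funext fun j => ?_)
    simp [← Circle.coe_inv_eq_conj]⟩

/-- The random unitary conjugate of `A` by `characterUnitary x`, which multiplies the entries of
`A` by characters. -/
noncomputable def characterConj (x : ℕ → n → ℝ) (A : Matrix n n ℂ) (w : CoinFlips k) :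
    Matrix n n ℂ :=
  (characterUnitary x w : Matrix n n ℂ) * A * (characterUnitary x w : Matrix n n ℂ)ᴴ

lemma characterConj_apply (x : ℕ → n → ℝ) (A : Matrix n n ℂ) (w : CoinFlips k) (j l : n) :
    characterConj x A w j l = A j l * character (fun i => x i j - x i l) w := by
  rw [characterConj, characterUnitary, diagonal_conjTranspose, mul_diagonal, diagonal_mul,
    character_sub, Pi.star_apply, Circle.coe_div, div_eq_mul_inv, ← Circle.coe_inv,
    Circle.coe_inv_eq_conj, starRingEnd_apply]
  ring

lemma schattenPow_characterConj (p : ℝ) (x : ℕ → n → ℝ) (A : Matrix n n ℂ) (w : CoinFlips k) :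
    schattenPow p (characterConj x A w) = schattenPow p A :=
  (schattenPow_mul_unitary p _ (star (characterUnitary x w))).trans (schattenPow_unitary_mul p _ A)

lemma transform_characterConj_apply (x : ℕ → n → ℝ) (A : Matrix n n ℂ) (w : CoinFlips k)
    (j l : n) :
    transform k c (characterConj x A) w j l
      = A j l * transform k c (fun v => (character (fun i => x i j - x i l) v : ℂ)) w := by
  have hentry := transform_map (entryLinearMap ℝ ℂ j l) k c (characterConj x A) w
  have hmul := transform_map (LinearMap.mulLeft ℝ (A j l)) k c
    (fun v => (character (fun i => x i j - x i l) v : ℂ)) w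
  simp only [entryLinearMap_apply, characterConj_apply] at hentry
  exact hentry.symm.trans hmul

lemma expect_reTrace_transform_characterConj_mul (x : ℕ → n → ℝ) (A B : Matrix n n ℂ) :
    𝔼 w : CoinFlips k, reTrace (transform k c (characterConj x A) w * characterConj x B w)
      = reTrace ((of fun j l => transformSymbol k c fun i => x i j - x i l).map Complex.ofReal
        ⊙ A * B) := by
  have hinv : ∀ (j l : n) (w : CoinFlips k), (character (fun i => x i l - x i j) w : ℂ)
      = (character (fun i => x i j - x i l) w : ℂ)⁻¹ := fun j l w => by
    rw [character_sub, character_sub, ← Circle.coe_inv, inv_div]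
  have hentry : ∀ j l, 𝔼 w : CoinFlips k,
        (transform k c (characterConj x A) w j l * characterConj x B w l j).re
      = transformSymbol k c (fun i => x i j - x i l) * (A j l * B l j).re := fun j l => by
    have hmap := expect_map (Complex.reLm ∘ₗ LinearMap.mulLeft ℝ (A j l * B l j)) univ
      fun w : CoinFlips k => (character (fun i => x i j - x i l) w : ℂ)⁻¹
        * transform k c (fun v => (character (fun i => x i j - x i l) v : ℂ)) w
    rw [expect_inv_character_mul_transform] at hmap
    simp only [LinearMap.comp_apply, LinearMap.mulLeft_apply, Complex.reLm_coe,
      Complex.re_mul_ofReal] at hmap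
    refine (expect_congr rfl fun w _ => ?_).trans (hmap.trans (mul_comm _ _))
    rw [transform_characterConj_apply, characterConj_apply, hinv]
    exact congrArg Complex.re (by ring)
  rw [reTrace_hadamard_mul]
  simp only [of_apply, ← hentry, reTrace_apply, trace, diag_apply, mul_apply,
    Complex.re_sum, expect_sum_comm]

lemma schurBound_transformSymbol (hpq : p.HolderConjugate q) (hc : ∀ i, |c i| ≤ 1)
    (x : ℕ → n → ℝ) :
    SchurBound p q (transformConst * (p * q))
      (of fun j l => transformSymbol k c fun i => x i j - x i l) := fun A B hA hB => by
  have h := transformBound hpq hc (characterConj (k := k) x A) (characterConj x B)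
    (fun w => isHermitian_mul_mul_conjTranspose _ hA)
    (fun w => isHermitian_mul_mul_conjTranspose _ hB)
  simpa only [expect_reTrace_transform_characterConj_mul, schattenPow_characterConj,
    Fintype.expect_const] using h

end TransformMultiplier

section RieszMultiplier

/-- The sequence `a, b, a, b, …`. -/
def alternating {α : Type*} (a b : α) (i : ℕ) : α := if Even i then a else b

lemma alternating_succ {α : Type*} (a b : α) (i : ℕ) :
    alternating a b (i + 1) = alternating b a i := by
  simp only [alternating, Nat.even_add_one, ite_not]

lemma prod_range_alternating {α M : Type*} [CommMonoid M] (g : α → M) (a b : α) (N : ℕ) :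
    ∏ i ∈ range (2 * N), g (alternating a b i) = (g a * g b) ^ N := by
  induction N with
  | zero => simp
  | succ N ih =>
    rw [mul_add_one, prod_range_succ, prod_range_succ, ih, alternating_succ, pow_succ, mul_assoc]
    simp [alternating]

lemma transformSymbol_alternating (N : ℕ) (a b : ℝ) :
    transformSymbol (2 * N) (alternating 0 1) (alternating a b)
      = Real.sin b ^ 2 * ∑ i ∈ range N, (Real.cos a ^ 2 * Real.cos b ^ 2) ^ i := by
  induction N with
  | zero => simp [transformSymbol]
  | succ N ih =>
    rw [mul_add_one]
    simp only [transformSymbol, alternating_succ, ih, prod_range_alternating]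
    rw [sum_range_succ]
    simp only [alternating, Even.zero, if_true]
    ring

lemma tendsto_transformSymbol_alternating (a b : ℝ) :
    Filter.Tendsto (fun N => transformSymbol (2 * N) (alternating 0 1) (alternating a b))
      Filter.atTop (nhds (Real.sin b ^ 2 / (1 - Real.cos a ^ 2 * Real.cos b ^ 2))) := by
  simp only [transformSymbol_alternating]
  rcases (mul_le_one₀ (Real.cos_sq_le_one a) (sq_nonneg _) (Real.cos_sq_le_one b)).eq_or_lt
    with h | h
  · have hsin : Real.sin b ^ 2 = 0 := by
      nlinarith [Real.sin_sq_add_cos_sq b, Real.cos_sq_le_one a, sq_nonneg (Real.cos b),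
        sq_nonneg (Real.sin b)]
    simp [hsin]
  · rw [div_eq_mul_inv]
    exact (hasSum_geometric_of_lt_one (by positivity) h).tendsto_sum_nat.const_mul _

lemma tendsto_sin_mul_div (y : ℝ) :
    Filter.Tendsto (fun h => Real.sin (h * y) / h) (nhdsWithin 0 {0}ᶜ) (nhds y) := by
  have hderiv : HasDerivAt (fun h => Real.sin (h * y)) y 0 := by
    simpa using ((hasDerivAt_id (0 : ℝ)).mul_const y).sin
  refine (hasDerivAt_iff_tendsto_slope.mp hderiv).congr fun h => ?_
  simp [slope_def_field]

lemma tendsto_sin_sq_div (a b : ℝ) :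
    Filter.Tendsto
      (fun h => Real.sin (h * b) ^ 2 / (1 - Real.cos (h * a) ^ 2 * Real.cos (h * b) ^ 2))
      (nhdsWithin 0 {0}ᶜ) (nhds (b ^ 2 / (a ^ 2 + b ^ 2))) := by
  rcases eq_or_ne b 0 with rfl | hb
  · simp
  have hcos : Filter.Tendsto (fun h => Real.cos (h * a)) (nhdsWithin 0 {0}ᶜ) (nhds 1) := by
    have hcont : Continuous fun h => Real.cos (h * a) := by fun_prop
    simpa using (hcont.tendsto 0).mono_left nhdsWithin_le_nhds
  have hlim := ((tendsto_sin_mul_div b).pow 2).div (((tendsto_sin_mul_div a).pow 2).add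
    ((hcos.pow 2).mul ((tendsto_sin_mul_div b).pow 2))) (by positivity)
  simp only [one_pow, one_mul] at hlim
  refine hlim.congr' ?_
  filter_upwards [self_mem_nhdsWithin] with h hh
  have hh : h ≠ 0 := hh
  have hdenom : 1 - Real.cos (h * a) ^ 2 * Real.cos (h * b) ^ 2
      = Real.sin (h * a) ^ 2 + Real.cos (h * a) ^ 2 * Real.sin (h * b) ^ 2 := by
    rw [Real.sin_sq, Real.sin_sq]; ring
  simp only [Pi.div_apply]
  rw [hdenom, div_pow, div_pow, ← mul_div_assoc, ← add_div,
    div_div_div_cancel_right₀ (by positivity)]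

variable {n : Type*} [Fintype n] [DecidableEq n] {p q : ℝ}

/-- The Schur multiplier of a second-order Riesz transform, the symbol `b² / (a² + b²)` at the
differences of `α` and `β`. It is `0` where both differences vanish. -/
noncomputable def rieszMultiplier (α β : n → ℝ) : Matrix n n ℝ :=
  of fun j l => (β j - β l) ^ 2 / ((α j - α l) ^ 2 + (β j - β l) ^ 2)

lemma schurBound_sin_sq_div (hpq : p.HolderConjugate q) (α β : n → ℝ) :
    SchurBound p q (transformConst * (p * q)) (of fun j l => Real.sin (β j - β l) ^ 2
      / (1 - Real.cos (α j - α l) ^ 2 * Real.cos (β j - β l) ^ 2)) := by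
  refine SchurBound.of_tendsto (l := Filter.atTop)
    (fun N => schurBound_transformSymbol (k := 2 * N) (c := alternating 0 1) hpq (fun i => ?_)
      (alternating α β)) fun j l => ?_
  · rw [alternating]; split_ifs <;> simp
  · refine (tendsto_transformSymbol_alternating (α j - α l) (β j - β l)).congr fun N =>
      congrArg (transformSymbol _ _) (funext fun i => ?_)
    simp only [alternating]; split_ifs <;> rfl

theorem schurBound_rieszMultiplier (hpq : p.HolderConjugate q) (α β : n → ℝ) :
    SchurBound p q (transformConst * (p * q)) (rieszMultiplier α β) :=
  SchurBound.of_tendsto (l := nhdsWithin (0 : ℝ) {0}ᶜ)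
    (fun h => schurBound_sin_sq_div hpq (fun j => h * α j) fun j => h * β j) fun j l => by
      simpa only [of_apply, rieszMultiplier, ← mul_sub] using
        tendsto_sin_sq_div (α j - α l) (β j - β l)

end RieszMultiplier

section PoissonIntegral

variable {t : ℝ}

lemma sq_sub_cos_add_sq_sin_pos (ht : |t| < 1) (θ : ℝ) :
    0 < (t - Real.cos θ) ^ 2 + Real.sin θ ^ 2 := by
  have hsq : t ^ 2 < 1 := (sq_lt_one_iff_abs_lt_one t).mpr ht
  rcases eq_or_ne (Real.sin θ) 0 with hsin | hsin
  · have hcos : t - Real.cos θ ≠ 0 := fun h => by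
      rw [sub_eq_zero.mp h, Real.cos_sq', hsin] at hsq
      norm_num at hsq
    positivity
  · positivity

lemma integral_poissonKernel (ht : |t| < 1) :
    ∫ θ in 0..2 * Real.pi, (1 - t ^ 2) / ((t - Real.cos θ) ^ 2 + Real.sin θ ^ 2)
      = 2 * Real.pi := by
  have hkernel : ∀ θ : ℝ, (poissonKernel 0 (t : ℂ) • fun _ => (1 : ℂ)) (circleMap 0 1 θ)
      = ((1 - t ^ 2) / ((t - Real.cos θ) ^ 2 + Real.sin θ ^ 2) : ℝ) := fun θ => by
    have hdist : ‖circleMap 0 1 θ - t‖ ^ 2 = (t - Real.cos θ) ^ 2 + Real.sin θ ^ 2 := by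
      rw [← Complex.normSq_eq_norm_sq, Complex.normSq_apply]
      simp only [circleMap, zero_add, Complex.ofReal_one, one_mul, Complex.sub_re, Complex.sub_im,
        Complex.ofReal_re, Complex.ofReal_im, Complex.exp_ofReal_mul_I_re,
        Complex.exp_ofReal_mul_I_im]
      ring
    simp [poissonKernel_def, hdist]
  have haverage := (diffContOnCl_const (c := (1 : ℂ))).circleAverage_poissonKernel_smul
    (c := 0) (R := 1) (w := t) (by simpa using ht)
  simp only [Real.circleAverage_def, hkernel] at haverage
  rw [intervalIntegral.integral_ofReal, Complex.real_smul] at haverage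
  exact ((inv_mul_eq_one₀ Real.two_pi_pos.ne').mp (by exact_mod_cast haverage)).symm

lemma integral_mul_sin_sq_div (ht : |t| < 1) :
    ∫ θ in 0..2 * Real.pi, t * Real.sin θ ^ 2 / ((t - Real.cos θ) ^ 2 + Real.sin θ ^ 2)
      = Real.pi * t := by
  rcases eq_or_ne t 0 with rfl | ht₀
  · simp
  have hdenom := sq_sub_cos_add_sq_sin_pos ht
  have hsplit : ∀ θ, t * Real.sin θ ^ 2 / ((t - Real.cos θ) ^ 2 + Real.sin θ ^ 2)
      = 1 / (4 * t) * (1 + t ^ 2 + 2 * t * Real.cos θ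
        - (1 - t ^ 2) * ((1 - t ^ 2) / ((t - Real.cos θ) ^ 2 + Real.sin θ ^ 2))) := fun θ => by
    have := (hdenom θ).ne'
    field_simp
    rw [Real.sin_sq]
    ring
  have hkernel : Continuous fun θ =>
      (1 - t ^ 2) / ((t - Real.cos θ) ^ 2 + Real.sin θ ^ 2) :=
    continuous_const.div (by fun_prop) fun θ => (hdenom θ).ne'
  simp only [hsplit]
  rw [intervalIntegral.integral_const_mul, intervalIntegral.integral_sub,
    intervalIntegral.integral_const_mul, integral_poissonKernel ht, intervalIntegral.integral_add]
  · simp only [intervalIntegral.integral_const, intervalIntegral.integral_const_mul, integral_cos,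
      Real.sin_two_pi, Real.sin_zero, sub_zero, mul_zero, add_zero, smul_eq_mul]
    field_simp
    ring
  all_goals exact Continuous.intervalIntegrable (by fun_prop) _ _

end PoissonIntegral

section DividedDifference

variable {n : Type*} {p q : ℝ}

/-- The divided differences of `y` with respect to `x`, with the junk value `0` where
`x j = x l`. -/
noncomputable def dividedDifference (x y : n → ℝ) : Matrix n n ℝ :=
  of fun j l => (y j - y l) / (x j - x l)

/-- The combination `sin θ • ab / (a² + b²) + cos θ • b² / (a² + b²)` of Riesz multipliers at the
differences `a` of `y - cos θ • x` and `b` of `sin θ • x`. The mixed symbol `ab / (a² + b²)` is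
obtained by rotating the coordinates of `rieszMultiplier` by `π / 4`. Averaging over `θ` turns this
multiplier into `dividedDifference x y`. -/
noncomputable def rotatedRiesz (x y : n → ℝ) (θ : ℝ) : Matrix n n ℝ :=
  Real.sin θ • (rieszMultiplier (y - Real.cos θ • x - Real.sin θ • x)
      (y - Real.cos θ • x + Real.sin θ • x) + (-(1 / 2) : ℝ) • of fun _ _ => 1)
    + Real.cos θ • rieszMultiplier (y - Real.cos θ • x) (Real.sin θ • x)

lemma abs_dividedDifference_lt_one {x y : n → ℝ} {j l : n} (hx : x j ≠ x l)
    (hxy : |y j - y l| < |x j - x l|) : |dividedDifference x y j l| < 1 := by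
  rwa [dividedDifference, of_apply, abs_div, div_lt_one (abs_pos.mpr (sub_ne_zero.mpr hx))]

lemma rotatedRiesz_apply_of_ne {x y : n → ℝ} {j l : n} (hx : x j ≠ x l)
    (hxy : |y j - y l| < |x j - x l|) (θ : ℝ) :
    rotatedRiesz x y θ j l = dividedDifference x y j l * Real.sin θ ^ 2
      / ((dividedDifference x y j l - Real.cos θ) ^ 2 + Real.sin θ ^ 2) := by
  have hX : x j - x l ≠ 0 := sub_ne_zero.mpr hx
  obtain ⟨t, ht⟩ : ∃ t, t = dividedDifference x y j l := ⟨_, rfl⟩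
  have hy : y j - y l = t * (x j - x l) := by rw [ht]; exact (div_mul_cancel₀ _ hX).symm
  have hdenom := (sq_sub_cos_add_sq_sin_pos (abs_dividedDifference_lt_one hx hxy) θ).ne'
  rw [← ht] at hdenom
  have ha : y j - Real.cos θ * x j - (y l - Real.cos θ * x l)
      = (x j - x l) * (t - Real.cos θ) := by linear_combination hy
  have hsub : y j - Real.cos θ * x j - Real.sin θ * x j
        - (y l - Real.cos θ * x l - Real.sin θ * x l)
      = (x j - x l) * (t - Real.cos θ - Real.sin θ) := by linear_combination hy
  have hadd : y j - Real.cos θ * x j + Real.sin θ * x j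
        - (y l - Real.cos θ * x l + Real.sin θ * x l)
      = (x j - x l) * (t - Real.cos θ + Real.sin θ) := by linear_combination hy
  have hrotate : (t - Real.cos θ - Real.sin θ) ^ 2 + (t - Real.cos θ + Real.sin θ) ^ 2
      = 2 * ((t - Real.cos θ) ^ 2 + Real.sin θ ^ 2) := by ring
  simp only [rotatedRiesz, rieszMultiplier, Matrix.add_apply, Matrix.smul_apply, of_apply,
    Pi.add_apply, Pi.sub_apply, Pi.smul_apply, smul_eq_mul, ha, hsub, hadd, ← mul_sub, mul_pow,
    ← mul_add, hrotate, ← ht]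
  field_simp
  ring

lemma rotatedRiesz_apply_of_eq {x y : n → ℝ} {j l : n} (hx : x j = x l) (θ : ℝ) :
    rotatedRiesz x y θ j l
      = ((y j - y l) ^ 2 / ((y j - y l) ^ 2 + (y j - y l) ^ 2) - 1 / 2) * Real.sin θ := by
  simp only [rotatedRiesz, rieszMultiplier, Matrix.add_apply, Matrix.smul_apply, of_apply,
    Pi.add_apply, Pi.sub_apply, Pi.smul_apply, smul_eq_mul, hx, add_sub_add_right_eq_sub,
    sub_sub_sub_cancel_right, sub_self, ne_eq, OfNat.ofNat_ne_zero, not_false_eq_true, zero_pow,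
    zero_div, mul_zero, add_zero]
  ring

lemma continuous_rotatedRiesz_apply {x y : n → ℝ} {j l : n}
    (hxy : x j ≠ x l → |y j - y l| < |x j - x l|) :
    Continuous fun θ => rotatedRiesz x y θ j l := by
  rcases eq_or_ne (x j) (x l) with hx | hx
  · simp only [rotatedRiesz_apply_of_eq hx]
    fun_prop
  · simp only [rotatedRiesz_apply_of_ne hx (hxy hx)]
    exact Continuous.div (by fun_prop) (by fun_prop) fun θ =>
      (sq_sub_cos_add_sq_sin_pos (abs_dividedDifference_lt_one hx (hxy hx)) θ).ne'

lemma integral_rotatedRiesz_apply {x y : n → ℝ} {j l : n}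
    (hxy : x j ≠ x l → |y j - y l| < |x j - x l|) :
    ∫ θ in 0..2 * Real.pi, rotatedRiesz x y θ j l = Real.pi * dividedDifference x y j l := by
  rcases eq_or_ne (x j) (x l) with hx | hx
  · simp [rotatedRiesz_apply_of_eq hx, dividedDifference, hx]
  · simp only [rotatedRiesz_apply_of_ne hx (hxy hx)]
    exact integral_mul_sin_sq_div (abs_dividedDifference_lt_one hx (hxy hx))

variable [Fintype n] [DecidableEq n]

lemma one_le_transformConst_mul (hpq : p.HolderConjugate q) : 1 ≤ transformConst * (p * q) := by
  have hpq_one : 1 ≤ p * q := one_le_mul_of_one_le_of_one_le hpq.lt.le hpq.symm.lt.le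
  have hconst : 1 ≤ transformConst := by
    have : (0 : ℝ) < 336 ^ (4 : ℝ) := by positivity
    rw [transformConst]
    linarith
  exact one_le_mul_of_one_le_of_one_le hconst hpq_one

lemma schurBound_rotatedRiesz (hpq : p.HolderConjugate q) (x y : n → ℝ) (θ : ℝ) :
    SchurBound p q (3 * (transformConst * (p * q))) (rotatedRiesz x y θ) := by
  refine SchurBound.mono hpq.pos hpq.symm.pos ?_
    ((((schurBound_rieszMultiplier hpq _ _).add ((schurBound_one hpq).smul _)).smul _).add
      ((schurBound_rieszMultiplier hpq _ _).smul _))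
  have hK := one_le_transformConst_mul hpq
  have hsin := mul_le_of_le_one_left (show 0 ≤ transformConst * (p * q) + 1 / 2 by linarith)
    (Real.abs_sin_le_one θ)
  have hcos := mul_le_of_le_one_left (show 0 ≤ transformConst * (p * q) by linarith)
    (Real.abs_cos_le_one θ)
  rw [abs_neg, abs_of_pos (one_half_pos (α := ℝ)), mul_one]
  linarith

lemma schurBound_dividedDifference_of_lt (hpq : p.HolderConjugate q) {x y : n → ℝ}
    (hxy : ∀ j l, x j ≠ x l → |y j - y l| < |x j - x l|) :
    SchurBound p q (6 * (transformConst * (p * q))) (dividedDifference x y) := by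
  have hpi := Real.pi_pos
  have hmean : dividedDifference x y
      = Real.pi⁻¹ • of fun j l => ∫ θ in 0..2 * Real.pi, rotatedRiesz x y θ j l := by
    ext j l
    rw [Matrix.smul_apply, of_apply, integral_rotatedRiesz_apply (hxy j l), smul_eq_mul,
      inv_mul_cancel_left₀ hpi.ne']
  have hbound : 6 * (transformConst * (p * q))
      = |Real.pi⁻¹| * ((2 * Real.pi - 0) * (3 * (transformConst * (p * q)))) := by
    rw [abs_of_pos (inv_pos.mpr hpi)]
    field_simp
    ring
  rw [hmean, hbound]
  exact (SchurBound.intervalIntegral Real.two_pi_pos.le (schurBound_rotatedRiesz hpq x y)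
    fun j l => continuous_rotatedRiesz_apply (hxy j l)).smul _

theorem schurBound_dividedDifference (hpq : p.HolderConjugate q) {x y : n → ℝ}
    (hxy : ∀ j l, |y j - y l| ≤ |x j - x l|) :
    SchurBound p q (12 * (transformConst * (p * q))) (dividedDifference x y) := by
  have hhalf : ∀ j l, x j ≠ x l →
      |((1 / 2 : ℝ) • y) j - ((1 / 2 : ℝ) • y) l| < |x j - x l| := fun j l hx => by
    rw [Pi.smul_apply, Pi.smul_apply, ← smul_sub, smul_eq_mul, abs_mul,
      abs_of_pos (one_half_pos (α := ℝ))]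
    linarith [hxy j l, abs_pos.mpr (sub_ne_zero.mpr hx)]
  have hdouble : dividedDifference x y = (2 : ℝ) • dividedDifference x ((1 / 2 : ℝ) • y) := by
    ext j l
    simp only [dividedDifference, of_apply, Matrix.smul_apply, Pi.smul_apply, smul_eq_mul]
    ring
  have hbound : 12 * (transformConst * (p * q)) = |2| * (6 * (transformConst * (p * q))) := by
    rw [abs_two]; ring
  rw [hdouble, hbound]
  exact (schurBound_dividedDifference_of_lt hpq hhalf).smul 2

end DividedDifference

/-! ### Hermitian dilation -/

section HermitianDilation

variable {n : Type*}

/-- The Hermitian dilation of `A`. It turns a Schur multiplier estimate for Hermitian matrices into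
one for `A`, whose rows and columns may then carry different data. -/
def hermitianDilation (A : Matrix n n ℂ) : Matrix (n ⊕ n) (n ⊕ n) ℂ :=
  fromBlocks 0 A Aᴴ 0

lemma isHermitian_hermitianDilation (A : Matrix n n ℂ) : (hermitianDilation A).IsHermitian :=
  IsHermitian.fromBlocks isHermitian_zero rfl isHermitian_zero

variable [Fintype n] [DecidableEq n]

lemma schattenPow_hermitianDilation (p : ℝ) (A : Matrix n n ℂ) :
    schattenPow p (hermitianDilation A) = 2 * schattenPow p A := by
  have hsq : (hermitianDilation A)ᴴ * hermitianDilation A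
      = fromBlocks (A * Aᴴ) 0 0 (Aᴴ * A) := by
    rw [(isHermitian_hermitianDilation A).eq, hermitianDilation, fromBlocks_multiply]
    simp
  rw [schattenPow_eq_sum_roots, schattenPow_eq_sum_roots, hsq, charpoly_fromBlocks_zero₁₂,
    charpoly_mul_comm A, Polynomial.roots_mul
      (mul_ne_zero (charpoly_monic _).ne_zero (charpoly_monic _).ne_zero),
    Multiset.map_add, Multiset.sum_add, two_mul]

lemma conjTranspose_mul_sub_unitaryDiag_mul_apply (U V : unitaryGroup n ℂ) (a b : n → ℝ)
    (j k : n) :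
    ((U : Matrix n n ℂ)ᴴ * (unitaryDiag U a - unitaryDiag V b) * (V : Matrix n n ℂ)) j k
      = (a j - b k) * ((U : Matrix n n ℂ)ᴴ * (V : Matrix n n ℂ)) j k := by
  have hU : (U : Matrix n n ℂ)ᴴ * (U : Matrix n n ℂ) = 1 := Unitary.coe_star_mul_self U
  have hV : (V : Matrix n n ℂ)ᴴ * (V : Matrix n n ℂ) = 1 := Unitary.coe_star_mul_self V
  have hprod : (U : Matrix n n ℂ)ᴴ * (unitaryDiag U a - unitaryDiag V b) * (V : Matrix n n ℂ)
      = diagonal (fun i => (a i : ℂ)) * ((U : Matrix n n ℂ)ᴴ * (V : Matrix n n ℂ))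
        - (U : Matrix n n ℂ)ᴴ * (V : Matrix n n ℂ) * diagonal fun i => (b i : ℂ) := by
    simp only [unitaryDiag_apply, Matrix.mul_sub, Matrix.sub_mul, ← Matrix.mul_assoc, hU,
      Matrix.one_mul]
    simp only [Matrix.mul_assoc, hV, Matrix.mul_one]
  rw [hprod, Matrix.sub_apply, diagonal_mul, mul_diagonal]
  ring

lemma schattenPow_hermitianDilation_conjTranspose_mul_mul (p : ℝ) (U V : unitaryGroup n ℂ)
    (H : Matrix n n ℂ) :
    schattenPow p (hermitianDilation ((U : Matrix n n ℂ)ᴴ * H * (V : Matrix n n ℂ)))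
      = 2 * schattenPow p H := by
  rw [schattenPow_hermitianDilation, schattenPow_mul_unitary, ← star_eq_conjTranspose,
    ← Unitary.coe_star, schattenPow_unitary_mul]

lemma dividedDifference_hadamard_hermitianDilation (f : ℝ → ℝ) (U V : unitaryGroup n ℂ)
    (μ ν : n → ℝ) :
    (dividedDifference (Sum.elim μ ν) (f ∘ Sum.elim μ ν)).map Complex.ofReal
        ⊙ hermitianDilation
          ((U : Matrix n n ℂ)ᴴ * (unitaryDiag U μ - unitaryDiag V ν) * (V : Matrix n n ℂ))
      = hermitianDilation ((U : Matrix n n ℂ)ᴴ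
          * (unitaryDiag U (f ∘ μ) - unitaryDiag V (f ∘ ν)) * (V : Matrix n n ℂ)) := by
  have hcancel : ∀ s t : ℝ,
      (((f s - f t) / (s - t) : ℝ) : ℂ) * (s - t) = (f s : ℂ) - f t := fun s t => by
    obtain rfl | hst := eq_or_ne s t
    · simp
    · exact_mod_cast div_mul_cancel₀ (f s - f t) (sub_ne_zero.mpr hst)
  ext (j | j) (k | k)
  · simp [hermitianDilation]
  · simp only [hermitianDilation, hadamard_apply, map_apply, dividedDifference, of_apply,
      Function.comp_apply, Sum.elim_inl, Sum.elim_inr, fromBlocks_apply₁₂,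
      conjTranspose_mul_sub_unitaryDiag_mul_apply]
    rw [← mul_assoc, hcancel]
  · simp only [hermitianDilation, hadamard_apply, map_apply, dividedDifference, of_apply,
      Function.comp_apply, Sum.elim_inl, Sum.elim_inr, fromBlocks_apply₂₁, conjTranspose_apply,
      conjTranspose_mul_sub_unitaryDiag_mul_apply, star_mul', star_sub, Complex.star_def,
      Complex.conj_ofReal]
    rw [← neg_sub (ν j : ℂ), ← neg_sub (f (ν j) : ℂ), neg_mul, neg_mul, mul_neg, ← mul_assoc,
      hcancel]
  · simp [hermitianDilation]

theorem schattenPow_unitaryDiag_comp_sub_le {p q : ℝ} (hpq : p.HolderConjugate q) {f : ℝ → ℝ}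
    (hf : LipschitzWith 1 f) (U V : unitaryGroup n ℂ) (μ ν : n → ℝ) :
    schattenPow p (unitaryDiag U (f ∘ μ) - unitaryDiag V (f ∘ ν))
      ≤ (12 * (transformConst * (p * q))) ^ p
        * schattenPow p (unitaryDiag U μ - unitaryDiag V ν) := by
  have hLip : ∀ j l, |(f ∘ Sum.elim μ ν) j - (f ∘ Sum.elim μ ν) l|
      ≤ |Sum.elim μ ν j - Sum.elim μ ν l| := fun j l => by
    simpa [Real.dist_eq] using hf.dist_le_mul (Sum.elim μ ν j) (Sum.elim μ ν l)
  have hK : 0 < 12 * (transformConst * (p * q)) := by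
    linarith [one_le_transformConst_mul hpq]
  have hdilated := (schurBound_dividedDifference hpq hLip).schattenPow_le hpq hK
    (isHermitian_hermitianDilation
      ((U : Matrix n n ℂ)ᴴ * (unitaryDiag U μ - unitaryDiag V ν) * (V : Matrix n n ℂ)))
    (by
      rw [dividedDifference_hadamard_hermitianDilation]
      exact isHermitian_hermitianDilation _)
  rw [dividedDifference_hadamard_hermitianDilation,
    schattenPow_hermitianDilation_conjTranspose_mul_mul,
    schattenPow_hermitianDilation_conjTranspose_mul_mul, mul_left_comm] at hdilated
  exact le_of_mul_le_mul_left hdilated two_pos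

end HermitianDilation

end SchattenLipschitz

open SchattenLipschitz

/-- Matrix (dimension-free) form of Corollary 5.5 of the paper: there is an absolute
constant `C > 0` such that for all `p ∈ (1,∞)`, all `d ≥ 1`, every `1`-Lipschitz
`f : ℝ → ℝ` and all `d×d` Hermitian matrices `X = U diag(μ) U*`, `Y = V diag(ν) V*`,
`‖f(X) − f(Y)‖_p ≤ C (p²/(p−1)) ‖X − Y‖_p`. -/
theorem lipschitz_schatten_matrix :
    ∃ C : ℝ, 0 < C ∧ ∀ (p : ℝ), 1 < p → ∀ (d : ℕ), 1 ≤ d →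
      ∀ (f : ℝ → ℝ), LipschitzWith 1 f →
      ∀ (X Y U V : Matrix (Fin d) (Fin d) ℂ) (μ ν : Fin d → ℝ),
        U ∈ Matrix.unitaryGroup (Fin d) ℂ → V ∈ Matrix.unitaryGroup (Fin d) ℂ →
        X = U * Matrix.diagonal (fun i => (μ i : ℂ)) * Uᴴ →
        Y = V * Matrix.diagonal (fun i => (ν i : ℂ)) * Vᴴ →
        schattenNorm p
            (U * Matrix.diagonal (fun i => (f (μ i) : ℂ)) * Uᴴ
              - V * Matrix.diagonal (fun i => (f (ν i) : ℂ)) * Vᴴ)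
          ≤ C * (p ^ 2 / (p - 1)) * schattenNorm p (X - Y) := by
  refine ⟨12 * transformConst, mul_pos (by norm_num) transformConst_pos, ?_⟩
  rintro p hp d - f hf X Y U V μ ν hU hV rfl rfl
  have hpq : p.HolderConjugate (p / (p - 1)) := Real.HolderConjugate.conjExponent hp
  have hpow := schattenPow_unitaryDiag_comp_sub_le hpq hf ⟨U, hU⟩ ⟨V, hV⟩ μ ν
  have hK : 0 ≤ 12 * (transformConst * (p * (p / (p - 1)))) := by
    linarith [one_le_transformConst_mul hpq]
  calc _ ≤ ((12 * (transformConst * (p * (p / (p - 1))))) ^ p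
          * schattenPow p (unitaryDiag ⟨U, hU⟩ μ - unitaryDiag ⟨V, hV⟩ ν)) ^ (1 / p) :=
        Real.rpow_le_rpow (schattenPow_nonneg _ _) hpow (one_div_nonneg.mpr hpq.nonneg)
    _ = 12 * (transformConst * (p * (p / (p - 1))))
          * schattenPow p (unitaryDiag ⟨U, hU⟩ μ - unitaryDiag ⟨V, hV⟩ ν) ^ (1 / p) := by
        rw [Real.mul_rpow (Real.rpow_nonneg hK p) (schattenPow_nonneg _ _), one_div,
          Real.rpow_rpow_inv hK hpq.ne_zero]
    _ = 12 * transformConst * (p ^ 2 / (p - 1)) * _ := by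
        rw [mul_div_assoc', ← sq, ← mul_assoc]
        rfl
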